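/- arXiv:1906.08997 — 5 statements merged into one kernel-verified Lean document; each statement's English description precedes it below -/
import Mathlib

section
/- Let ρ_AB be a bipartite density matrix on ℂ^{d_A}⊗ℂ^{d_B} and let {M_μ} be a POVM on ℂ^{d_A} all of whose elements are diagonal (an incoherent measurement). Set p^{M_μ} = tr((M_μ⊗1)ρ_AB) and ρ_{B|M_μ} = tr_A((M_μ⊗1)ρ_AB)/p^{M_μ}. Then Σ_μ p^{M_μ} S(ρ_{B|M_μ}) ≥ Σ_{i=0}^{d_A−1} p_i S(ρ_{B|i}), where terms with vanishing probability are omitted. -/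
open Matrix Kronecker BigOperators
open scoped ComplexOrder

noncomputable section

/-- The completely dephasing map `Δ`: keeps only the diagonal entries. -/
def deph {n : Type*} [DecidableEq n] (M : Matrix n n ℂ) : Matrix n n ℂ :=
  Matrix.of fun i j => if i = j then M i j else 0

/-- A density matrix: positive semidefinite with unit trace. -/
def IsDensityMatrix {n : Type*} [Fintype n] (ρ : Matrix n n ℂ) : Prop :=
  ρ.PosSemidef ∧ ρ.trace = 1

/-- Von Neumann entropy (base 2): `S(ρ) = -∑ λ_k log₂ λ_k`. -/
def vnEntropy {n : Type*} [Fintype n] [DecidableEq n] (ρ : Matrix n n ℂ) : ℝ :=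
  if h : ρ.IsHermitian then -∑ k, h.eigenvalues k * Real.logb 2 (h.eigenvalues k) else 0

/-- Partial trace over the second factor: `ρ_A = tr_B ρ_AB`. -/
def ptrB {A B : Type*} [Fintype B] (ρ : Matrix (A × B) (A × B) ℂ) : Matrix A A ℂ :=
  Matrix.of fun a a' => ∑ b, ρ (a, b) (a', b)

/-- Partial trace over the first factor: `ρ_B = tr_A ρ_AB`. -/
def ptrA {A B : Type*} [Fintype A] (ρ : Matrix (A × B) (A × B) ℂ) : Matrix B B ℂ :=
  Matrix.of fun b b' => ∑ a, ρ (a, b) (a, b')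

/-- `p_i = tr((|i⟩⟨i|⊗1) ρ_AB)`. -/
def probA {A B : Type*} [Fintype B] (ρ : Matrix (A × B) (A × B) ℂ) (i : A) : ℝ :=
  (∑ b, ρ (i, b) (i, b)).re

/-- `ρ_{B|i} = tr_A((|i⟩⟨i|⊗1) ρ_AB) / p_i`. -/
def condB {A B : Type*} [Fintype B] (ρ : Matrix (A × B) (A × B) ℂ) (i : A) :
    Matrix B B ℂ :=
  ((probA ρ i : ℝ) : ℂ)⁻¹ • Matrix.of fun b b' => ρ (i, b) (i, b')

/-- Quantum discord based on incoherent measurement: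
`D_{B|A}(ρ) = ∑ᵢ pᵢ S(ρ_{B|i}) + S(ρ_A) − S(ρ_AB)`. -/
def QDI {A B : Type*} [Fintype A] [Fintype B] [DecidableEq A] [DecidableEq B]
    (ρ : Matrix (A × B) (A × B) ℂ) : ℝ :=
  (∑ i, probA ρ i * vnEntropy (condB ρ i)) + vnEntropy (ptrB ρ) - vnEntropy ρ

/-- Dephasing on the first subsystem: `Δ_A ⊗ id`. -/
def dephA {A B : Type*} [DecidableEq A] (ρ : Matrix (A × B) (A × B) ℂ) :
    Matrix (A × B) (A × B) ℂ :=
  Matrix.of fun p q => if p.1 = q.1 then ρ p q else 0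

/-- Dephasing on the second subsystem: `id ⊗ Δ_B`. -/
def dephB {A B : Type*} [DecidableEq B] (ρ : Matrix (A × B) (A × B) ℂ) :
    Matrix (A × B) (A × B) ℂ :=
  Matrix.of fun p q => if p.2 = q.2 then ρ p q else 0

/-- Trace out the last system of a tripartite state on `A × (B × B')`, leaving `A × B`. -/
def ptrB2 {A B B' : Type*} [Fintype B'] (ρ : Matrix (A × B × B') (A × B × B') ℂ) :
    Matrix (A × B) (A × B) ℂ :=
  Matrix.of fun p q => ∑ c, ρ (p.1, p.2, c) (q.1, q.2, c)

/-- Trace out the middle system of a tripartite state on `A × (B × B')`, leaving `A × B'`. -/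
def ptrB1 {A B B' : Type*} [Fintype B] (ρ : Matrix (A × B × B') (A × B × B') ℂ) :
    Matrix (A × B') (A × B') ℂ :=
  Matrix.of fun p q => ∑ b, ρ (p.1, b, p.2) (q.1, b, q.2)

/-- The outcome probability `p^{M_μ} = tr((M_μ ⊗ 1) ρ_AB)` of a measurement on `A`. -/
def pMeas {dA dB m : ℕ} (ρ : Matrix (Fin dA × Fin dB) (Fin dA × Fin dB) ℂ)
    (M : Fin m → Matrix (Fin dA) (Fin dA) ℂ) (μ : Fin m) : ℝ :=
  (((M μ ⊗ₖ (1 : Matrix (Fin dB) (Fin dB) ℂ)) * ρ).trace).re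

/-- The conditional state `ρ_{B|M_μ} = tr_A((M_μ ⊗ 1) ρ_AB) / p^{M_μ}`. -/
def condMeas {dA dB m : ℕ} (ρ : Matrix (Fin dA × Fin dB) (Fin dA × Fin dB) ℂ)
    (M : Fin m → Matrix (Fin dA) (Fin dA) ℂ) (μ : Fin m) : Matrix (Fin dB) (Fin dB) ℂ :=
  ((pMeas ρ M μ : ℝ) : ℂ)⁻¹ • ptrA ((M μ ⊗ₖ (1 : Matrix (Fin dB) (Fin dB) ℂ)) * ρ)

/-!
Weight the entropy of a positive matrix `σ` by its trace, `H(σ) = tr σ · S(σ / tr σ)`. Then `H` is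
homogeneous, and concavity of `S` makes it superadditive. A diagonal measurement on `A` only mixes
the unnormalised conditional states `σᵢ = ⟨i|ρ|i⟩` of `B`: the outcome `μ` leaves `∑ᵢ (M_μ)ᵢᵢ σᵢ`.
As `∑_μ (M_μ)ᵢᵢ = 1`,
  `∑ᵢ H(σᵢ) = ∑_μ ∑ᵢ H((M_μ)ᵢᵢ σᵢ) ≤ ∑_μ H(∑ᵢ (M_μ)ᵢᵢ σᵢ)`.

Concavity of `S` is an instance of concavity of `A ↦ tr f(A)` for concave `f`, which comes from
Peierls' inequality `tr f(A) ≤ ∑ₖ f(⟨bₖ, A bₖ⟩)` for an orthonormal basis `b`: take for `b` an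
eigenbasis of a convex combination, where Peierls' inequality for the combination is an equality.
-/

section Peierls

variable {𝕜 E ι κ : Type*} [RCLike 𝕜] [NormedAddCommGroup E] [InnerProductSpace 𝕜 E]
  [Fintype ι] [Fintype κ] {T : E →ₗ[𝕜] E} {l : ι → ℝ} {s : Set ℝ} {f : ℝ → ℝ}

lemma re_inner_map_self_eq_sum (v : OrthonormalBasis ι 𝕜 E)
    (hT : ∀ j, T (v j) = (l j : 𝕜) • v j) (x : E) :
    RCLike.re (inner 𝕜 x (T x)) = ∑ j, ‖inner 𝕜 (v j) x‖ ^ 2 • l j := by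
  have hTx : T x = ∑ j, ((l j : 𝕜) * inner 𝕜 (v j) x) • v j := by
    conv_lhs => rw [← v.sum_repr' x, map_sum]
    simp only [map_smul, hT, smul_smul, mul_comm]
  rw [hTx, inner_sum, map_sum]
  refine Finset.sum_congr rfl fun j _ => ?_
  rw [inner_smul_right, mul_assoc, RCLike.re_ofReal_mul, inner_mul_symm_re_eq_norm, norm_mul,
    norm_inner_symm x, ← sq, smul_eq_mul, mul_comm]

lemma re_inner_map_self_mem_of_convex (hs : Convex ℝ s) (v : OrthonormalBasis ι 𝕜 E)
    (hT : ∀ j, T (v j) = (l j : 𝕜) • v j) (hl : ∀ j, l j ∈ s) {x : E} (hx : ‖x‖ = 1) :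
    RCLike.re (inner 𝕜 x (T x)) ∈ s := by
  rw [re_inner_map_self_eq_sum v hT]
  exact hs.sum_mem (fun j _ => sq_nonneg _) (by rw [v.sum_sq_norm_inner_right, hx, one_pow])
    fun j _ => hl j

lemma sum_map_eigenvalue_le_sum_map_re_inner (hf : ConcaveOn ℝ s f) (v : OrthonormalBasis ι 𝕜 E)
    (hT : ∀ j, T (v j) = (l j : 𝕜) • v j) (hl : ∀ j, l j ∈ s) (b : OrthonormalBasis κ 𝕜 E) :
    ∑ j, f (l j) ≤ ∑ k, f (RCLike.re (inner 𝕜 (b k) (T (b k)))) := by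
  have hcol (j : ι) : ∑ k, ‖inner 𝕜 (v j) (b k)‖ ^ 2 = 1 := by
    rw [b.sum_sq_norm_inner_left, v.norm_eq_one, one_pow]
  have hrow (k : κ) : ∑ j, ‖inner 𝕜 (v j) (b k)‖ ^ 2 = 1 := by
    rw [v.sum_sq_norm_inner_right, b.norm_eq_one, one_pow]
  calc ∑ j, f (l j)
      = ∑ j, (∑ k, ‖inner 𝕜 (v j) (b k)‖ ^ 2) • f (l j) := by simp only [hcol, one_smul]
    _ = ∑ k, ∑ j, ‖inner 𝕜 (v j) (b k)‖ ^ 2 • f (l j) := by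
        simp only [Finset.sum_smul]
        exact Finset.sum_comm
    _ ≤ ∑ k, f (∑ j, ‖inner 𝕜 (v j) (b k)‖ ^ 2 • l j) :=
        Finset.sum_le_sum fun k _ =>
          hf.le_map_sum (fun j _ => sq_nonneg _) (hrow k) fun j _ => hl j
    _ = ∑ k, f (RCLike.re (inner 𝕜 (b k) (T (b k)))) := by
        simp only [re_inner_map_self_eq_sum v hT]

end Peierls

section TraceConcavity

variable {𝕜 n : Type*} [RCLike 𝕜] [Fintype n] [DecidableEq n] {A : Matrix n n 𝕜} {s : Set ℝ}
  {f : ℝ → ℝ}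

lemma toEuclideanLin_eigenvectorBasis (hA : A.IsHermitian) (j : n) :
    A.toEuclideanLin (hA.eigenvectorBasis j) =
      (hA.eigenvalues j : 𝕜) • hA.eigenvectorBasis j := by
  rw [toLpLin_apply, hA.mulVec_eigenvectorBasis, RCLike.real_smul_eq_coe_smul (K := 𝕜)]
  rfl

lemma eigenvalues_eq_re_inner (hA : A.IsHermitian) (j : n) :
    hA.eigenvalues j = RCLike.re
      (inner 𝕜 (hA.eigenvectorBasis j) (A.toEuclideanLin (hA.eigenvectorBasis j))) := by
  rw [toEuclideanLin_eigenvectorBasis, inner_smul_right, inner_self_eq_norm_sq_to_K,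
    hA.eigenvectorBasis.norm_eq_one]
  simp only [RCLike.ofReal_one, one_pow, mul_one, RCLike.ofReal_re]

lemma re_trace_cfc_eq_sum (hA : A.IsHermitian) (f : ℝ → ℝ) :
    RCLike.re (cfc f A).trace = ∑ j, f (hA.eigenvalues j) := by
  rw [hA.cfc_eq, IsHermitian.cfc, Unitary.conjStarAlgAut_apply, trace_mul_cycle,
    Unitary.coe_star_mul_self, one_mul]
  simp only [trace_diagonal, Function.comp_apply, ← RCLike.ofReal_sum, RCLike.ofReal_re]

lemma re_inner_toEuclideanLin_smul_add_smul (a b : ℝ) (A B : Matrix n n 𝕜)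
    (x : EuclideanSpace 𝕜 n) :
    RCLike.re (inner 𝕜 x ((a • A + b • B).toEuclideanLin x)) =
      a • RCLike.re (inner 𝕜 x (A.toEuclideanLin x)) +
        b • RCLike.re (inner 𝕜 x (B.toEuclideanLin x)) := by
  rw [RCLike.real_smul_eq_coe_smul (K := 𝕜) a A, RCLike.real_smul_eq_coe_smul (K := 𝕜) b B]
  simp only [map_add, map_smul, LinearMap.add_apply, LinearMap.smul_apply, inner_add_right,
    inner_smul_right, RCLike.re_ofReal_mul, smul_eq_mul]

lemma eigenvalues_mem_of_spectrum_subset (hA : A.IsHermitian) (hs : spectrum ℝ A ⊆ s) (j : n) :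
    hA.eigenvalues j ∈ s :=
  hs (hA.eigenvalues_mem_spectrum_real j)

lemma convex_setOf_spectrum_subset (hs : Convex ℝ s) :
    Convex ℝ {A : Matrix n n 𝕜 | A.IsHermitian ∧ spectrum ℝ A ⊆ s} := by
  rintro A ⟨hA, hAs⟩ B ⟨hB, hBs⟩ a b ha hb hab
  have hC : (a • A + b • B).IsHermitian := (hA.smul (.all a)).add (hB.smul (.all b))
  refine ⟨hC, ?_⟩
  rw [hC.spectrum_real_eq_range_eigenvalues]
  rintro _ ⟨k, rfl⟩
  rw [eigenvalues_eq_re_inner, re_inner_toEuclideanLin_smul_add_smul]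
  have hk : ‖hC.eigenvectorBasis k‖ = 1 := hC.eigenvectorBasis.norm_eq_one k
  exact hs
    (re_inner_map_self_mem_of_convex hs _ (toEuclideanLin_eigenvectorBasis hA)
      (eigenvalues_mem_of_spectrum_subset hA hAs) hk)
    (re_inner_map_self_mem_of_convex hs _ (toEuclideanLin_eigenvectorBasis hB)
      (eigenvalues_mem_of_spectrum_subset hB hBs) hk) ha hb hab

lemma re_trace_cfc_le_sum_map_re_inner (hf : ConcaveOn ℝ s f) (hA : A.IsHermitian)
    (hs : spectrum ℝ A ⊆ s) (b : OrthonormalBasis n 𝕜 (EuclideanSpace 𝕜 n)) :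
    RCLike.re (cfc f A).trace ≤
      ∑ k, f (RCLike.re (inner 𝕜 (b k) (A.toEuclideanLin (b k)))) := by
  rw [re_trace_cfc_eq_sum hA]
  exact sum_map_eigenvalue_le_sum_map_re_inner hf _ (toEuclideanLin_eigenvectorBasis hA)
    (eigenvalues_mem_of_spectrum_subset hA hs) b

theorem concaveOn_re_trace_cfc (hf : ConcaveOn ℝ s f) :
    ConcaveOn ℝ {A : Matrix n n 𝕜 | A.IsHermitian ∧ spectrum ℝ A ⊆ s}
      fun A => RCLike.re (cfc f A).trace := by
  refine ⟨convex_setOf_spectrum_subset hf.1, ?_⟩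
  rintro A ⟨hA, hAs⟩ B ⟨hB, hBs⟩ a b ha hb hab
  obtain ⟨hC, -⟩ := convex_setOf_spectrum_subset hf.1 ⟨hA, hAs⟩ ⟨hB, hBs⟩ ha hb hab
  set e := hC.eigenvectorBasis
  let q (X : Matrix n n 𝕜) (k : n) : ℝ := RCLike.re (inner 𝕜 (e k) (X.toEuclideanLin (e k)))
  have hq {X : Matrix n n 𝕜} (hX : X.IsHermitian) (hXs : spectrum ℝ X ⊆ s) (k : n) : q X k ∈ s :=
    re_inner_map_self_mem_of_convex hf.1 _ (toEuclideanLin_eigenvectorBasis hX)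
      (eigenvalues_mem_of_spectrum_subset hX hXs) (e.norm_eq_one k)
  calc a • RCLike.re (cfc f A).trace + b • RCLike.re (cfc f B).trace
      ≤ a • ∑ k, f (q A k) + b • ∑ k, f (q B k) := by
        gcongr
        · exact re_trace_cfc_le_sum_map_re_inner hf hA hAs e
        · exact re_trace_cfc_le_sum_map_re_inner hf hB hBs e
    _ = ∑ k, (a • f (q A k) + b • f (q B k)) := by
        rw [Finset.smul_sum, Finset.smul_sum, Finset.sum_add_distrib]
    _ ≤ ∑ k, f (a • q A k + b • q B k) :=
        Finset.sum_le_sum fun k _ => hf.2 (hq hA hAs k) (hq hB hBs k) ha hb hab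
    _ = RCLike.re (cfc f (a • A + b • B)).trace := by
        simp only [re_trace_cfc_eq_sum hC, eigenvalues_eq_re_inner,
          re_inner_toEuclideanLin_smul_add_smul, q, e]

end TraceConcavity

section Entropy

variable {n ι κ : Type*} [Fintype n] [Fintype ι] [Fintype κ]

lemma re_trace_nonneg {σ : Matrix n n ℂ} (hσ : σ.PosSemidef) : 0 ≤ σ.trace.re :=
  (Complex.nonneg_iff.1 hσ.trace_nonneg).1

lemma re_trace_smul_inv_re_trace_smul {σ : Matrix n n ℂ} (hσ : σ.PosSemidef) :
    σ.trace.re • σ.trace.re⁻¹ • σ = σ := by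
  rcases eq_or_ne σ.trace.re 0 with h | h
  · have hzero : σ = 0 := hσ.trace_eq_zero_iff.1
      (Complex.ext h (Complex.nonneg_iff.1 hσ.trace_nonneg).2.symm)
    rw [hzero, smul_zero, smul_zero]
  · exact smul_inv_smul₀ h σ

variable [DecidableEq n]

lemma posSemidef_iff_spectrum_real_subset_Ici {𝕜 : Type*} [RCLike 𝕜] {A : Matrix n n 𝕜} :
    A.PosSemidef ↔ A.IsHermitian ∧ spectrum ℝ A ⊆ Set.Ici 0 := by
  refine ⟨fun h => ⟨h.isHermitian, ?_⟩, fun ⟨h, hs⟩ => ?_⟩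
  · rw [h.isHermitian.spectrum_real_eq_range_eigenvalues]
    exact Set.range_subset_iff.2 h.eigenvalues_nonneg
  · exact h.posSemidef_iff_eigenvalues_nonneg.2 (eigenvalues_mem_of_spectrum_subset h hs)

lemma vnEntropy_eq_re_trace_cfc_negMulLog (ρ : Matrix n n ℂ) :
    vnEntropy ρ = (Real.log 2)⁻¹ • (cfc Real.negMulLog ρ).trace.re := by
  by_cases h : ρ.IsHermitian
  · rw [vnEntropy, dif_pos h, ← RCLike.re_eq_complex_re, re_trace_cfc_eq_sum h, Finset.smul_sum,
      ← Finset.sum_neg_distrib]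
    refine Finset.sum_congr rfl fun k _ => ?_
    rw [Real.negMulLog, Real.logb, smul_eq_mul]
    ring
  · have hcfc : cfc Real.negMulLog ρ = 0 := cfc_apply_of_not_predicate ρ h
    rw [vnEntropy, dif_neg h, hcfc, trace_zero, Complex.zero_re, smul_zero]

theorem concaveOn_vnEntropy : ConcaveOn ℝ {ρ : Matrix n n ℂ | ρ.PosSemidef} vnEntropy := by
  simp only [funext vnEntropy_eq_re_trace_cfc_negMulLog, posSemidef_iff_spectrum_real_subset_Ici]
  exact (concaveOn_re_trace_cfc Real.concaveOn_negMulLog).smul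
    (inv_nonneg.2 (Real.log_nonneg one_le_two))

/-- The entropy of the state proportional to a positive matrix `σ`, weighted by the trace of `σ`.
For `σ` the unnormalised state left by a measurement outcome, the trace is the probability of that
outcome, so this is the contribution `p S(σ / p)` of the outcome to the average entropy. It is `0`
when the trace is `0`, so that outcomes of vanishing probability are omitted. -/
def weightedEntropy (σ : Matrix n n ℂ) : ℝ :=
  σ.trace.re * vnEntropy (σ.trace.re⁻¹ • σ)

lemma weightedEntropy_smul (c : ℝ) (σ : Matrix n n ℂ) :
    weightedEntropy (c • σ) = c * weightedEntropy σ := by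
  rcases eq_or_ne c 0 with rfl | hc
  · simp [weightedEntropy]
  · have hstate : (c * σ.trace.re)⁻¹ • c • σ = σ.trace.re⁻¹ • σ := by
      rw [smul_smul, _root_.mul_inv_rev, inv_mul_cancel_right₀ hc]
    rw [weightedEntropy, weightedEntropy, trace_smul, Complex.smul_re, smul_eq_mul, hstate,
      mul_assoc]

lemma sum_weightedEntropy_le_weightedEntropy_sum {σ : ι → Matrix n n ℂ}
    (hσ : ∀ i, (σ i).PosSemidef) :
    ∑ i, weightedEntropy (σ i) ≤ weightedEntropy (∑ i, σ i) := by
  set t : ι → ℝ := fun i => (σ i).trace.re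
  have ht (i : ι) : 0 ≤ t i := re_trace_nonneg (hσ i)
  have htrace : (∑ i, σ i).trace.re = ∑ i, t i := by rw [trace_sum, Complex.re_sum]
  rcases (Finset.sum_nonneg fun i _ => ht i).eq_or_lt with hT | hT
  · have ht0 (i : ι) : t i = 0 :=
      (Finset.sum_eq_zero_iff_of_nonneg fun i _ => ht i).1 hT.symm i (Finset.mem_univ i)
    simp only [weightedEntropy, htrace, ← hT, zero_mul]
    exact (Finset.sum_eq_zero fun i _ => mul_eq_zero_of_left (ht0 i) _).le
  · set T := ∑ i, t i
    have hmix : ∑ i, (T⁻¹ * t i) • (t i)⁻¹ • σ i = T⁻¹ • ∑ i, σ i := by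
      simp only [mul_smul, t, re_trace_smul_inv_re_trace_smul (hσ _), Finset.smul_sum]
    calc ∑ i, weightedEntropy (σ i)
        = T * ∑ i, (T⁻¹ * t i) • vnEntropy ((t i)⁻¹ • σ i) := by
          simp only [mul_smul, ← Finset.smul_sum]
          exact (mul_inv_cancel_left₀ hT.ne' _).symm
      _ ≤ T * vnEntropy (∑ i, (T⁻¹ * t i) • (t i)⁻¹ • σ i) := by
          gcongr
          exact concaveOn_vnEntropy.le_map_sum
            (fun i _ => mul_nonneg (inv_nonneg.2 hT.le) (ht i))
            (by rw [← Finset.mul_sum, inv_mul_cancel₀ hT.ne'])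
            fun i _ => (hσ i).smul (inv_nonneg.2 (ht i))
      _ = weightedEntropy (∑ i, σ i) := by rw [hmix, weightedEntropy, htrace]

lemma sum_weightedEntropy_le_sum_weightedEntropy_sum_smul {σ : ι → Matrix n n ℂ}
    (hσ : ∀ i, (σ i).PosSemidef) {q : κ → ι → ℝ} (hq : ∀ μ i, 0 ≤ q μ i)
    (hq_sum : ∀ i, ∑ μ, q μ i = 1) :
    ∑ i, weightedEntropy (σ i) ≤ ∑ μ, weightedEntropy (∑ i, q μ i • σ i) :=
  calc ∑ i, weightedEntropy (σ i)
      = ∑ i, ∑ μ, weightedEntropy (q μ i • σ i) := by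
        simp only [weightedEntropy_smul, ← Finset.sum_mul, hq_sum, one_mul]
    _ = ∑ μ, ∑ i, weightedEntropy (q μ i • σ i) := Finset.sum_comm
    _ ≤ ∑ μ, weightedEntropy (∑ i, q μ i • σ i) :=
        Finset.sum_le_sum fun μ _ =>
          sum_weightedEntropy_le_weightedEntropy_sum fun i => (hσ i).smul (hq μ i)

end Entropy

section IncoherentMeasurement

lemma isDiag_of_deph_eq_self {n : Type*} [DecidableEq n] {M : Matrix n n ℂ} (h : deph M = M) :
    M.IsDiag := by
  intro i j hij
  rw [← h, deph, of_apply, if_neg hij]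

variable {A B ι : Type*} [Fintype B]

lemma trace_ptrA [Fintype A] (X : Matrix (A × B) (A × B) ℂ) : (ptrA X).trace = X.trace := by
  simp only [trace, diag_apply, ptrA, of_apply, Fintype.sum_prod_type]
  exact Finset.sum_comm

variable [DecidableEq B]

lemma probA_mul_vnEntropy_condB (ρ : Matrix (A × B) (A × B) ℂ) (i : A) :
    probA ρ i * vnEntropy (condB ρ i) =
      weightedEntropy (ρ.submatrix (Prod.mk i) (Prod.mk i)) := by
  rw [condB, ← Complex.ofReal_inv, Complex.coe_smul]
  rfl

variable [Fintype A]

lemma ptrA_kronecker_one_mul_of_isDiag {M : Matrix A A ℂ} (hM : M.IsDiag)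
    (ρ : Matrix (A × B) (A × B) ℂ) :
    ptrA ((M ⊗ₖ (1 : Matrix B B ℂ)) * ρ) =
      ∑ i, M i i • ρ.submatrix (Prod.mk i) (Prod.mk i) := by
  classical
  conv_lhs => rw [← hM.diagonal_diag, ← diagonal_one, diagonal_kronecker_diagonal]
  ext b b'
  simp [ptrA, Matrix.sum_apply]

lemma pMeas_mul_vnEntropy_condMeas {dA dB m : ℕ}
    (ρ : Matrix (Fin dA × Fin dB) (Fin dA × Fin dB) ℂ) (M : Fin m → Matrix (Fin dA) (Fin dA) ℂ)
    (μ : Fin m) :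
    pMeas ρ M μ * vnEntropy (condMeas ρ M μ) =
      weightedEntropy (ptrA ((M μ ⊗ₖ (1 : Matrix (Fin dB) (Fin dB) ℂ)) * ρ)) := by
  rw [weightedEntropy, trace_ptrA, condMeas, pMeas, ← Complex.ofReal_inv, Complex.coe_smul]

theorem stmt5_general [DecidableEq A] [Fintype ι] {ρ : Matrix (A × B) (A × B) ℂ}
    (hρ : ρ.PosSemidef) {M : ι → Matrix A A ℂ} (hpos : ∀ μ, (M μ).PosSemidef)
    (hsum : ∑ μ, M μ = 1) (hdiag : ∀ μ, (M μ).IsDiag) :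
    ∑ i, weightedEntropy (ρ.submatrix (Prod.mk i) (Prod.mk i)) ≤
      ∑ μ, weightedEntropy (ptrA ((M μ ⊗ₖ (1 : Matrix B B ℂ)) * ρ)) := by
  have hreal (μ : ι) (i : A) : ((M μ i i).re : ℂ) = M μ i i :=
    (hpos μ).isHermitian.coe_re_apply_self i
  have hreduced (μ : ι) : ptrA ((M μ ⊗ₖ (1 : Matrix B B ℂ)) * ρ) =
      ∑ i, (M μ i i).re • ρ.submatrix (Prod.mk i) (Prod.mk i) := by
    simp only [ptrA_kronecker_one_mul_of_isDiag (hdiag μ), ← Complex.coe_smul, hreal]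
  simp only [hreduced]
  refine sum_weightedEntropy_le_sum_weightedEntropy_sum_smul (fun i => hρ.submatrix _)
    (fun μ i => (Complex.nonneg_iff.1 (hpos μ).diag_nonneg).1) fun i => ?_
  rw [← Complex.re_sum, ← Matrix.sum_apply, hsum, one_apply_eq, Complex.one_re]

end IncoherentMeasurement

/-- for any incoherent POVM `{M_μ}` on `A`,
`∑_μ p^{M_μ} S(ρ_{B|M_μ}) ≥ ∑_i p_i S(ρ_{B|i})`. -/
theorem stmt5 {dA dB m : ℕ} (ρ : Matrix (Fin dA × Fin dB) (Fin dA × Fin dB) ℂ)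
    (hρ : IsDensityMatrix ρ)
    (M : Fin m → Matrix (Fin dA) (Fin dA) ℂ)
    (hpos : ∀ μ, (M μ).PosSemidef) (hsum : ∑ μ, M μ = 1)
    (hinc : ∀ μ, deph (M μ) = M μ) :
    ∑ i, probA ρ i * vnEntropy (condB ρ i) ≤
      ∑ μ, pMeas ρ M μ * vnEntropy (condMeas ρ M μ) := by
  simpa only [probA_mul_vnEntropy_condB, pMeas_mul_vnEntropy_condMeas] using
    stmt5_general hρ.1 hpos hsum fun μ => isDiag_of_deph_eq_self (hinc μ)
end
end

section
/- For every bipartite density matrix ρ_AB on ℂ^{d_A}⊗ℂ^{d_B}, the identity Σ_{i=0}^{d_A−1} p_i S(ρ_{B|i}) + S(ρ_A) − S(ρ_AB) = C_r(ρ_AB) − C_r(ρ_ÃB) − C_r(ρ_A) holds, where ρ_ÃB = (Δ_A⊗id)(ρ_AB), Δ on the bipartite system dephases in the product standard basis, and Δ on system A dephases in the standard basis of ℂ^{d_A}. -/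
open Matrix Kronecker BigOperators
open scoped ComplexOrder

noncomputable section

/-- Relative entropy of coherence `C_r(ρ) = S(Δ(ρ)) − S(ρ)`. -/
def relEntCoh {n : Type*} [Fintype n] [DecidableEq n] (ρ : Matrix n n ℂ) : ℝ :=
  vnEntropy (deph ρ) - vnEntropy ρ

/-!
Dephasing `A` makes `ρ` block diagonal with blocks `pᵢ ρ_{B|i}`. Entropy is a function of the roots
of the characteristic polynomial, so it is additive over blocks, and since
`S(c • σ) = c S(σ) - c log c tr σ` the blocks add up to the chain rule
`S(ρ_ÃB) = ∑ pᵢ S(ρ_{B|i}) + S(Δ(ρ_A))`. As `ρ_ÃB` and `ρ_AB` have the same diagonal, the identity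
is this chain rule with the entropies regrouped.
-/

lemma deph_eq_diagonal {n : Type*} [DecidableEq n] (M : Matrix n n ℂ) :
    deph M = diagonal (diag M) := by
  ext i j
  by_cases hij : i = j <;> simp [deph, hij]

section Entropy

variable {m n o : Type*} [Fintype m] [Fintype n] [Fintype o] [DecidableEq m] [DecidableEq n]
  [DecidableEq o]

lemma charpoly_blockDiagonal {R : Type*} [CommRing R] (M : o → Matrix n n R) :
    (blockDiagonal M).charpoly = ∏ i, (M i).charpoly := by
  have hchar : charmatrix (blockDiagonal M) = blockDiagonal fun i => charmatrix (M i) := by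
    ext ⟨a, i⟩ ⟨b, j⟩ : 1
    by_cases hij : i = j
    · subst hij
      simp [charmatrix_apply, diagonal_apply]
    · simp [blockDiagonal_apply, hij]
  simp only [charpoly, hchar, det_blockDiagonal]

lemma vnEntropy_eq_sum_roots_charpoly {M : Matrix n n ℂ} (hM : M.IsHermitian) :
    vnEntropy M = -(M.charpoly.roots.map fun z => z.re * Real.logb 2 z.re).sum := by
  simp [vnEntropy, hM, hM.roots_charpoly_eq_eigenvalues]

lemma vnEntropy_eq_of_charpoly_eq_prod {ι : Type*} [Fintype ι] {M : Matrix n n ℂ}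
    (hM : M.IsHermitian) {f : ι → ℝ}
    (hf : M.charpoly = ∏ j, (Polynomial.X - Polynomial.C (f j : ℂ))) :
    vnEntropy M = -∑ j, f j * Real.logb 2 (f j) := by
  have hroots : M.charpoly.roots = Finset.univ.val.map fun j => (f j : ℂ) := by
    rw [hf, Polynomial.roots_prod _ _
      (Finset.prod_ne_zero_iff.mpr fun j _ => Polynomial.X_sub_C_ne_zero _)]
    simp
  simp [vnEntropy_eq_sum_roots_charpoly hM, hroots]

lemma vnEntropy_reindex (e : m ≃ n) {M : Matrix m m ℂ} (hM : M.IsHermitian) :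
    vnEntropy (reindex e e M) = vnEntropy M := by
  have hreindex : (reindex e e M).IsHermitian := hM.submatrix _
  rw [vnEntropy_eq_sum_roots_charpoly hreindex, charpoly_reindex,
    vnEntropy_eq_sum_roots_charpoly hM]

lemma vnEntropy_blockDiagonal {M : o → Matrix n n ℂ} (hM : ∀ i, (M i).IsHermitian) :
    vnEntropy (blockDiagonal M) = ∑ i, vnEntropy (M i) := by
  have hfactor : (blockDiagonal M).charpoly =
      ∏ x : o × n, (Polynomial.X - Polynomial.C (((hM x.1).eigenvalues x.2 : ℝ) : ℂ)) := by
    rw [charpoly_blockDiagonal, Fintype.prod_prod_type]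
    exact Finset.prod_congr rfl fun i _ => (hM i).charpoly_eq
  rw [vnEntropy_eq_of_charpoly_eq_prod (isHermitian_blockDiagonal_iff.mpr hM) hfactor,
    Fintype.sum_prod_type, ← Finset.sum_neg_distrib]
  simp only [vnEntropy, hM, dite_true]

lemma charpoly_real_smul {𝕜 : Type*} [RCLike 𝕜] {M : Matrix n n 𝕜} (hM : M.IsHermitian)
    (c : ℝ) :
    (c • M).charpoly =
      ∏ k, (Polynomial.X - Polynomial.C ((c * hM.eigenvalues k : ℝ) : 𝕜)) := by
  rw [← cfc_const_mul_id c M hM.isSelfAdjoint]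
  exact hM.charpoly_cfc_eq (c * ·)

lemma vnEntropy_smul {M : Matrix n n ℂ} (hM : M.IsHermitian) (c : ℝ) :
    vnEntropy (c • M) = c * vnEntropy M - c * Real.logb 2 c * M.trace.re := by
  have hlog : ∀ x : ℝ, c * x * Real.logb 2 (c * x) =
      c * (x * Real.logb 2 x) + c * Real.logb 2 c * x := by
    intro x
    rcases eq_or_ne c 0 with rfl | hc
    · simp
    rcases eq_or_ne x 0 with rfl | hx
    · simp
    rw [Real.logb_mul hc hx]
    ring
  have htrace : M.trace.re = ∑ k, hM.eigenvalues k := by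
    simp [hM.trace_eq_sum_eigenvalues]
  have hsmul : vnEntropy (c • M) =
      -∑ k, c * hM.eigenvalues k * Real.logb 2 (c * hM.eigenvalues k) :=
    vnEntropy_eq_of_charpoly_eq_prod (hM.smul (.all c)) (charpoly_real_smul hM c)
  rw [hsmul, vnEntropy, dif_pos hM, htrace]
  simp only [hlog, Finset.sum_add_distrib, ← Finset.mul_sum]
  ring

lemma vnEntropy_deph {M : Matrix n n ℂ} (hM : M.IsHermitian) :
    vnEntropy (deph M) = -∑ i, (M i i).re * Real.logb 2 (M i i).re := by
  have hdeph : deph M = diagonal fun i => ((M i i).re : ℂ) := by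
    rw [deph_eq_diagonal]
    exact congrArg diagonal (funext fun i => (hM.coe_re_apply_self i).symm)
  have hherm : (deph M).IsHermitian := by
    rw [hdeph]
    exact isHermitian_diagonal_of_self_adjoint _ (by ext i; simp)
  exact vnEntropy_eq_of_charpoly_eq_prod hherm (by rw [hdeph, charpoly_diagonal])

end Entropy

section Bipartite

variable {A B : Type*}

/-- The unnormalised conditional state `pᵢ ρ_{B|i} = tr_A((|i⟩⟨i|⊗1) ρ_AB)` of the second system,
that is, the `i`-th diagonal block of `ρ`. -/
def blockB (ρ : Matrix (A × B) (A × B) ℂ) (i : A) : Matrix B B ℂ :=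
  ρ.submatrix (Prod.mk i) (Prod.mk i)

lemma dephA_eq_reindex_blockDiagonal [DecidableEq A] (ρ : Matrix (A × B) (A × B) ℂ) :
    dephA ρ =
      reindex (Equiv.prodComm B A) (Equiv.prodComm B A) (blockDiagonal (blockB ρ)) := by
  ext ⟨a, b⟩ ⟨a', b'⟩
  by_cases ha : a = a' <;> simp [dephA, blockB, blockDiagonal_apply, ha]

lemma deph_dephA [DecidableEq A] [DecidableEq B] (ρ : Matrix (A × B) (A × B) ℂ) :
    deph (dephA ρ) = deph ρ := by
  ext p q
  by_cases hpq : p = q <;> simp [deph, dephA, hpq]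

variable [Fintype B] {ρ : Matrix (A × B) (A × B) ℂ}

lemma isHermitian_ptrB (hρ : ρ.IsHermitian) : (ptrB ρ).IsHermitian := by
  ext a a'
  simp [ptrB, fun b => hρ.apply (a, b) (a', b)]

lemma re_trace_blockB (ρ : Matrix (A × B) (A × B) ℂ) (i : A) :
    (blockB ρ i).trace.re = probA ρ i := rfl

lemma condB_eq_smul_blockB (ρ : Matrix (A × B) (A × B) ℂ) (i : A) :
    condB ρ i = (probA ρ i)⁻¹ • blockB ρ i := by
  ext b b'
  simp [condB, blockB]

lemma isHermitian_condB (hρ : ρ.IsHermitian) (i : A) : (condB ρ i).IsHermitian := by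
  rw [condB_eq_smul_blockB]
  exact (hρ.submatrix _).smul (.all _)

-- When `pᵢ = 0`, `condB ρ i` is zero by convention, but then the positive block has trace zero.
lemma probA_smul_condB (hρ : ρ.PosSemidef) (i : A) :
    probA ρ i • condB ρ i = blockB ρ i := by
  rw [condB_eq_smul_blockB]
  rcases eq_or_ne (probA ρ i) 0 with hp | hp
  · have hblock : (blockB ρ i).PosSemidef := hρ.submatrix _
    have htrace : (blockB ρ i).trace = 0 :=
      Complex.ext hp (Complex.nonneg_iff.mp hblock.trace_nonneg).2.symm
    simp [hblock.trace_eq_zero_iff.mp htrace]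
  · exact smul_inv_smul₀ hp _

variable [DecidableEq B]

lemma vnEntropy_blockB (hρ : ρ.PosSemidef) (i : A) :
    vnEntropy (blockB ρ i) =
      probA ρ i * vnEntropy (condB ρ i) - probA ρ i * Real.logb 2 (probA ρ i) := by
  have htrace : probA ρ i * (condB ρ i).trace.re = probA ρ i := by
    have h := congrArg (fun M => M.trace.re) (probA_smul_condB hρ i)
    simpa [trace_smul, re_trace_blockB] using h
  calc vnEntropy (blockB ρ i)
      = probA ρ i * vnEntropy (condB ρ i) -
          Real.logb 2 (probA ρ i) * (probA ρ i * (condB ρ i).trace.re) := by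
        rw [← probA_smul_condB hρ i, vnEntropy_smul (isHermitian_condB hρ.isHermitian i)]
        ring
    _ = probA ρ i * vnEntropy (condB ρ i) - probA ρ i * Real.logb 2 (probA ρ i) := by
        rw [htrace, mul_comm (Real.logb _ _)]

variable [Fintype A] [DecidableEq A]

lemma vnEntropy_dephA_eq_sum_blockB (hρ : ρ.IsHermitian) :
    vnEntropy (dephA ρ) = ∑ i, vnEntropy (blockB ρ i) := by
  have hblock (i : A) : (blockB ρ i).IsHermitian := hρ.submatrix _
  rw [dephA_eq_reindex_blockDiagonal,
    vnEntropy_reindex _ (isHermitian_blockDiagonal_iff.mpr hblock), vnEntropy_blockDiagonal hblock]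

lemma vnEntropy_dephA (hρ : ρ.PosSemidef) :
    vnEntropy (dephA ρ) =
      ∑ i, probA ρ i * vnEntropy (condB ρ i) + vnEntropy (deph (ptrB ρ)) := by
  have hmarginal : vnEntropy (deph (ptrB ρ)) = -∑ i, probA ρ i * Real.logb 2 (probA ρ i) :=
    vnEntropy_deph (isHermitian_ptrB hρ.isHermitian)
  rw [vnEntropy_dephA_eq_sum_blockB hρ.isHermitian, hmarginal]
  simp only [vnEntropy_blockB hρ, Finset.sum_sub_distrib]
  ring

theorem stmt7_general (hρ : ρ.PosSemidef) :
    (∑ i, probA ρ i * vnEntropy (condB ρ i)) + vnEntropy (ptrB ρ) - vnEntropy ρ =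
      relEntCoh ρ - relEntCoh (dephA ρ) - relEntCoh (ptrB ρ) := by
  rw [relEntCoh, relEntCoh, relEntCoh, deph_dephA, vnEntropy_dephA hρ]
  ring

end Bipartite

/-- `∑ pᵢ S(ρ_{B|i}) + S(ρ_A) − S(ρ_AB) = C_r(ρ_AB) − C_r(ρ_ÃB) − C_r(ρ_A)`,
where `ρ_ÃB = (Δ_A ⊗ id)(ρ_AB)`. -/
theorem stmt7 {dA dB : ℕ} (ρ : Matrix (Fin dA × Fin dB) (Fin dA × Fin dB) ℂ)
    (hρ : IsDensityMatrix ρ) :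
    (∑ i, probA ρ i * vnEntropy (condB ρ i)) + vnEntropy (ptrB ρ) - vnEntropy ρ =
      relEntCoh ρ - relEntCoh (dephA ρ) - relEntCoh (ptrB ρ) :=
  stmt7_general hρ.1
end
end

section
/- Let ρ_ABB' be a tripartite density matrix on ℂ^{d_A}⊗ℂ^{d_B}⊗ℂ^{d_B'}. Then D_{BB'|A}(ρ_ABB') ≥ D_{B|A}(tr_{B'} ρ_ABB'), i.e., discarding the subsystem B' on the unmeasured side does not increase the QDI measured on A. -/
open Matrix Kronecker BigOperators
open scoped ComplexOrder

noncomputable section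

/-!
Write `Δ` for the dephasing of `A` and `D` for the relative entropy. Then
`QDI ρ = D(ρ‖Δρ) + S(ρ_A) + ∑ p_i log p_i`, where the last two terms depend only on `ρ_A`.
Discarding `B'` preserves `ρ_A` and commutes with `Δ`, so the theorem reduces to monotonicity of `D`
under the partial trace. For this, let `r_i`, `s_j` be the eigenvalues of `ρ`, `σ` and `w_ji` the
squared overlaps of the eigenvectors. The function `t ↦ ∑ w_ji r_i log (s_j + t r_i)` takes the
value `tr ρ log σ` at `0`, equals `tr ρ log t + tr ρ log ρ + o(1)` at `∞`, and has derivative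
`⟨ρ, (L_σ + t R_ρ)⁻¹ ρ⟩ = max_X (2 Re tr ρX - tr σXXᴴ - t tr ρXᴴX)`. By the Kadison–Schwarz
inequality for the dual map `α`, substituting `α X` for `X` shows that each such maximum can only
decrease under the channel; integrating over `t` gives the monotonicity of `D`.
-/

open scoped MatrixOrder

section LogPotential

variable {ι κ : Type*} {w r s : ι → ℝ} {w' r' s' : κ → ℝ}

lemma mul_eq_zero_or_pos (hr : ∀ i, 0 ≤ r i) (hs : ∀ i, 0 ≤ s i)
    (h₀ : ∀ i, s i = 0 → w i * r i = 0) (i : ι) : w i * r i = 0 ∨ 0 < s i ∧ 0 < r i := by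
  rcases (hs i).eq_or_lt with hsi | hsi
  · exact .inl (h₀ i hsi.symm)
  rcases (hr i).eq_or_lt with hri | hri
  · exact .inl (by rw [← hri, mul_zero])
  · exact .inr ⟨hsi, hri⟩

variable [Fintype ι] [Fintype κ]

/-- The function `t ↦ ∑ i, w i * r i * log (s i + t * r i)`. It interpolates between the two halves
of a weighted relative entropy: the value at `0` is `∑ w r log s`, and the constant term at `∞` is
`∑ w r log r`. -/
def logPotential (w r s : ι → ℝ) (t : ℝ) : ℝ :=
  ∑ i, w i * r i * Real.log (s i + t * r i)

lemma hasDerivAt_logPotential (hr : ∀ i, 0 ≤ r i) (hs : ∀ i, 0 ≤ s i)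
    (h₀ : ∀ i, s i = 0 → w i * r i = 0) {t : ℝ} (ht : 0 < t) :
    HasDerivAt (logPotential w r s) (∑ i, w i * (r i ^ 2 / (s i + t * r i))) t := by
  refine HasDerivAt.fun_sum fun i _ => ?_
  rcases mul_eq_zero_or_pos hr hs h₀ i with h | ⟨hsi, hri⟩
  · have hterm : w i * (r i ^ 2 / (s i + t * r i)) = 0 := by
      rw [sq, mul_div_assoc, ← mul_assoc, h, zero_mul]
    simpa only [h, hterm, zero_mul] using hasDerivAt_const t (0 : ℝ)
  · have haffine : HasDerivAt (fun x : ℝ => s i + x * r i) (r i) t := by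
      simpa using ((hasDerivAt_id t).mul_const (r i)).const_add (s i)
    exact ((haffine.log (by positivity)).const_mul (w i * r i)).congr_deriv (by ring)

lemma continuousOn_logPotential (hr : ∀ i, 0 ≤ r i) (hs : ∀ i, 0 ≤ s i)
    (h₀ : ∀ i, s i = 0 → w i * r i = 0) : ContinuousOn (logPotential w r s) (Set.Ici 0) := by
  refine continuousOn_finsetSum _ fun i _ => ?_
  rcases mul_eq_zero_or_pos hr hs h₀ i with h | ⟨hsi, hri⟩
  · simpa only [h, zero_mul] using continuousOn_const
  · refine continuousOn_const.mul (ContinuousOn.log (by fun_prop) fun t ht => ?_)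
    have : 0 ≤ t := ht
    positivity

lemma tendsto_logPotential_sub_log (hr : ∀ i, 0 ≤ r i) (hs : ∀ i, 0 ≤ s i)
    (h₀ : ∀ i, s i = 0 → w i * r i = 0) :
    Filter.Tendsto (fun t => logPotential w r s t - (∑ i, w i * r i) * Real.log t) Filter.atTop
      (nhds (∑ i, w i * r i * Real.log (r i))) := by
  have hscale : ∀ t : ℝ, 0 < t → ∑ i, w i * r i * Real.log (s i * t⁻¹ + r i) =
      logPotential w r s t - (∑ i, w i * r i) * Real.log t := by
    intro t ht
    rw [logPotential, Finset.sum_mul, ← Finset.sum_sub_distrib]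
    refine Finset.sum_congr rfl fun i _ => ?_
    rcases mul_eq_zero_or_pos hr hs h₀ i with h | ⟨hsi, hri⟩
    · simp [h]
    · rw [← mul_sub, ← Real.log_div (by positivity) ht.ne']
      congr 2
      field_simp
  refine Filter.Tendsto.congr' ((Filter.eventually_gt_atTop 0).mono hscale) ?_
  refine tendsto_finsetSum _ fun i _ => ?_
  rcases mul_eq_zero_or_pos hr hs h₀ i with h | ⟨-, hri⟩
  · simp [h]
  · refine (Filter.Tendsto.log ?_ hri.ne').const_mul _
    simpa using (tendsto_inv_atTop_zero.const_mul (s i)).add_const (r i)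

theorem sum_mul_log_sub_le_of_resolvent_le (hr : ∀ i, 0 ≤ r i) (hs : ∀ i, 0 ≤ s i)
    (h₀ : ∀ i, s i = 0 → w i * r i = 0) (hr' : ∀ i, 0 ≤ r' i) (hs' : ∀ i, 0 ≤ s' i)
    (h₀' : ∀ i, s' i = 0 → w' i * r' i = 0) (hmass : ∑ i, w' i * r' i = ∑ i, w i * r i)
    (hresolvent : ∀ t : ℝ, 0 < t →
      ∑ i, w' i * (r' i ^ 2 / (s' i + t * r' i)) ≤ ∑ i, w i * (r i ^ 2 / (s i + t * r i))) :
    ∑ i, w' i * r' i * Real.log (r' i) - ∑ i, w' i * r' i * Real.log (s' i) ≤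
      ∑ i, w i * r i * Real.log (r i) - ∑ i, w i * r i * Real.log (s i) := by
  set g : ℝ → ℝ := fun t => logPotential w r s t - logPotential w' r' s' t with hg
  have hderiv {t : ℝ} (ht : 0 < t) : HasDerivAt g (∑ i, w i * (r i ^ 2 / (s i + t * r i)) -
      ∑ i, w' i * (r' i ^ 2 / (s' i + t * r' i))) t :=
    (hasDerivAt_logPotential hr hs h₀ ht).sub (hasDerivAt_logPotential hr' hs' h₀' ht)
  have hmono : MonotoneOn g (Set.Ici 0) := by
    refine monotoneOn_of_deriv_nonneg (convex_Ici 0)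
      ((continuousOn_logPotential hr hs h₀).sub (continuousOn_logPotential hr' hs' h₀')) ?_ ?_
    all_goals
      rw [interior_Ici]
      intro t ht
    · exact (hderiv ht).differentiableAt.differentiableWithinAt
    · exact (sub_nonneg.2 (hresolvent t ht)).trans_eq (hderiv ht).deriv.symm
  have hlim : Filter.Tendsto g Filter.atTop
      (nhds (∑ i, w i * r i * Real.log (r i) - ∑ i, w' i * r' i * Real.log (r' i))) :=
    ((tendsto_logPotential_sub_log hr hs h₀).sub (tendsto_logPotential_sub_log hr' hs' h₀')).congr
      fun t => by rw [hmass, sub_sub_sub_cancel_right]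
  have hle : g 0 ≤ _ := ge_of_tendsto hlim <| (Filter.eventually_ge_atTop 0).mono fun t ht =>
    hmono Set.self_mem_Ici ht ht
  simp only [hg, logPotential, zero_mul, add_zero] at hle
  linarith

end LogPotential

section SpectralCalculus

variable {n : Type*} [Fintype n] [DecidableEq n] {ρ σ : Matrix n n ℂ}

lemma eigenvectorUnitary_mul_conjTranspose_mul (hρ : ρ.IsHermitian) (M : Matrix n n ℂ) :
    (hρ.eigenvectorUnitary : Matrix n n ℂ) *
      ((hρ.eigenvectorUnitary : Matrix n n ℂ)ᴴ * M) = M := by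
  rw [← mul_assoc, ← star_eq_conjTranspose,
    Unitary.mul_star_self_of_mem hρ.eigenvectorUnitary.2, one_mul]

lemma trace_cfc_mul (hρ : ρ.IsHermitian) (f : ℝ → ℝ) (M : Matrix n n ℂ) :
    (cfc f ρ * M).trace = ∑ i, (f (hρ.eigenvalues i) : ℂ) *
      ((hρ.eigenvectorUnitary : Matrix n n ℂ)ᴴ * M * hρ.eigenvectorUnitary) i i := by
  rw [hρ.cfc_eq, IsHermitian.cfc, Unitary.conjStarAlgAut_apply, mul_assoc, trace_mul_cycle,
    trace_mul_comm, trace]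
  simp only [diag_apply, star_eq_conjTranspose, diagonal_mul]
  rfl

lemma trace_mul_eq_sum (hρ : ρ.IsHermitian) (M : Matrix n n ℂ) :
    (ρ * M).trace = ∑ i, (hρ.eigenvalues i : ℂ) *
      ((hρ.eigenvectorUnitary : Matrix n n ℂ)ᴴ * M * hρ.eigenvectorUnitary) i i := by
  rw [← trace_cfc_mul hρ (fun x => x), cfc_id' ℝ ρ hρ.isSelfAdjoint]

/-- The matrix of inner products between the eigenvectors of `σ` (rows) and of `ρ` (columns). -/
def overlap (hρ : ρ.IsHermitian) (hσ : σ.IsHermitian) : Matrix n n ℂ :=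
  (hσ.eigenvectorUnitary : Matrix n n ℂ)ᴴ * hρ.eigenvectorUnitary

lemma re_trace_cfc_mul_cfc (hρ : ρ.IsHermitian) (hσ : σ.IsHermitian) (f g : ℝ → ℝ) :
    (cfc f ρ * cfc g σ).trace.re = ∑ p : n × n, Complex.normSq (overlap hρ hσ p.1 p.2) *
      (f (hρ.eigenvalues p.2) * g (hσ.eigenvalues p.1)) := by
  have hconj : (hρ.eigenvectorUnitary : Matrix n n ℂ)ᴴ * cfc g σ * hρ.eigenvectorUnitary =
      (overlap hρ hσ)ᴴ * diagonal (fun j => (g (hσ.eigenvalues j) : ℂ)) * overlap hρ hσ := by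
    rw [hσ.cfc_eq, IsHermitian.cfc, Unitary.conjStarAlgAut_apply, overlap, conjTranspose_mul,
      conjTranspose_conjTranspose]
    simp only [mul_assoc, star_eq_conjTranspose]
    rfl
  rw [trace_cfc_mul hρ, hconj, Fintype.sum_prod_type, Finset.sum_comm, Complex.re_sum]
  refine Finset.sum_congr rfl fun i _ => ?_
  rw [mul_apply, Finset.mul_sum, Complex.re_sum]
  refine Finset.sum_congr rfl fun j _ => ?_
  simp only [mul_diagonal, conjTranspose_apply, Complex.star_def, Complex.normSq_apply,
    Complex.mul_re, Complex.mul_im, Complex.conj_re, Complex.conj_im, Complex.ofReal_re,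
    Complex.ofReal_im]
  ring

lemma re_trace_mul_cfc (hρ : ρ.IsHermitian) (hσ : σ.IsHermitian) (g : ℝ → ℝ) :
    (ρ * cfc g σ).trace.re = ∑ p : n × n, Complex.normSq (overlap hρ hσ p.1 p.2) *
      (hρ.eigenvalues p.2 * g (hσ.eigenvalues p.1)) := by
  rw [← re_trace_cfc_mul_cfc hρ hσ (fun x => x), cfc_id' ℝ ρ hρ.isSelfAdjoint]

lemma mul_cfc_self (hρ : ρ.IsHermitian) (f : ℝ → ℝ) :
    ρ * cfc f ρ = cfc (fun x => x * f x) ρ := by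
  rw [cfc_mul (fun x => x) f ρ continuousOn_id (finite_real_spectrum.continuousOn _),
    cfc_id' ℝ ρ hρ.isSelfAdjoint]

lemma cfc_eq_aeval (hρ : ρ.IsHermitian) {f : ℝ → ℝ} {q : Polynomial ℝ}
    (hq : ∀ x ∈ spectrum ℝ ρ, f x = q.eval x) : cfc f ρ = Polynomial.aeval ρ q := by
  rw [cfc_congr hq, cfc_polynomial q ρ hρ.isSelfAdjoint]

lemma re_trace_mul_cfc_self (hρ : ρ.IsHermitian) (f : ℝ → ℝ) :
    (ρ * cfc f ρ).trace.re = ∑ i, hρ.eigenvalues i * f (hρ.eigenvalues i) := by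
  rw [mul_cfc_self hρ, ← mul_one (cfc _ ρ), trace_cfc_mul hρ, mul_one, ← star_eq_conjTranspose,
    Unitary.coe_star_mul_self, Complex.re_sum]
  simp only [one_apply_eq, mul_one, Complex.ofReal_re]

lemma vnEntropy_eq_neg_re_trace_mul_cfc_logb (hρ : ρ.IsHermitian) :
    vnEntropy ρ = -(ρ * cfc (Real.logb 2) ρ).trace.re := by
  rw [vnEntropy, dif_pos hρ, re_trace_mul_cfc_self hρ]

lemma vnEntropy_smul_s9 (hρ : ρ.IsHermitian) (c : ℝ) :
    vnEntropy (c • ρ) = c * vnEntropy ρ - c * Real.logb 2 c * ρ.trace.re := by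
  have hscaled : cfc (Real.logb 2) (c • ρ) = cfc (fun x => Real.logb 2 (c * x)) ρ :=
    (cfc_comp_const_mul c _ ρ ((finite_real_spectrum.image _).continuousOn _)
      hρ.isSelfAdjoint).symm
  have hlog (x : ℝ) : c * (x * Real.logb 2 (c * x)) =
      c * (x * Real.logb 2 x) + c * Real.logb 2 c * x := by
    rcases eq_or_ne c 0 with rfl | hc
    · simp
    rcases eq_or_ne x 0 with rfl | hx
    · simp
    rw [Real.logb_mul hc hx]
    ring
  rw [vnEntropy_eq_neg_re_trace_mul_cfc_logb (hρ.smul (IsSelfAdjoint.all c)), hscaled, smul_mul,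
    trace_smul, Complex.smul_re, smul_eq_mul, re_trace_mul_cfc_self hρ, Finset.mul_sum,
    vnEntropy, dif_pos hρ, hρ.trace_eq_sum_eigenvalues, Complex.re_sum]
  simp only [hlog, Finset.sum_add_distrib, ← Finset.mul_sum, Complex.coe_algebraMap,
    Complex.ofReal_re]
  ring

end SpectralCalculus

section RelativeEntropy

variable {n : Type*} [Fintype n] {ρ σ : Matrix n n ℂ}

/-- `σ` dominates `ρ`: every effect of zero expectation in `σ` has zero expectation in `ρ`.
For positive semidefinite matrices this says that the kernel of `σ` lies in that of `ρ`. -/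
def TraceAbsolutelyContinuous (ρ σ : Matrix n n ℂ) : Prop :=
  ∀ Y : Matrix n n ℂ, Y.PosSemidef → (σ * Y).trace = 0 → (ρ * Y).trace = 0

/-- The concave quadratic functional whose maximum over `X` is the resolvent sum. -/
def variationalForm (t : ℝ) (ρ σ X : Matrix n n ℂ) : ℝ :=
  2 * (ρ * X).trace.re - (σ * (X * Xᴴ)).trace.re - t * (ρ * (Xᴴ * X)).trace.re

lemma mul_conjTranspose_self_apply_self {m : Type*} (Y : Matrix m n ℂ) (j : m) :
    (Y * Yᴴ) j j = ((∑ i, Complex.normSq (Y j i) : ℝ) : ℂ) := by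
  simp only [mul_apply, conjTranspose_apply, Complex.star_def, Complex.mul_conj,
    Complex.ofReal_sum]

lemma re_trace_mul_nonneg (hρ : ρ.PosSemidef) (hσ : σ.PosSemidef) : 0 ≤ (ρ * σ).trace.re := by
  classical
  have hsum := re_trace_mul_cfc hρ.1 hσ.1 fun x => x
  rw [cfc_id' ℝ σ hσ.1.isSelfAdjoint] at hsum
  rw [hsum]
  exact Finset.sum_nonneg fun p _ => mul_nonneg (Complex.normSq_nonneg _)
    (mul_nonneg (hρ.eigenvalues_nonneg _) (hσ.eigenvalues_nonneg _))

lemma re_trace_mul_le_re_trace_mul (hρ : ρ.PosSemidef) {X Y : Matrix n n ℂ} (hXY : X ≤ Y) :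
    (ρ * X).trace.re ≤ (ρ * Y).trace.re := by
  have := re_trace_mul_nonneg hρ (le_iff.1 hXY)
  rwa [mul_sub, trace_sub, Complex.sub_re, sub_nonneg] at this

variable [DecidableEq n]

/-- The quantum relative entropy `D(ρ‖σ) = tr ρ (log₂ ρ - log₂ σ)`. Since `logb 2 0 = 0`, this is
the usual quantity only when `TraceAbsolutelyContinuous ρ σ`; otherwise the usual value is `∞`. -/
def relEntropy (ρ σ : Matrix n n ℂ) : ℝ :=
  (ρ * (cfc (Real.logb 2) ρ - cfc (Real.logb 2) σ)).trace.re

/-- The Hilbert–Schmidt expectation `⟨ρ, (L_σ + t R_ρ)⁻¹ ρ⟩`, where `L_σ` and `R_ρ` are left and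
right multiplication, written in the eigenbases of `ρ` and `σ`. -/
def resolventSum (hρ : ρ.IsHermitian) (hσ : σ.IsHermitian) (t : ℝ) : ℝ :=
  ∑ p : n × n, Complex.normSq (overlap hρ hσ p.1 p.2) *
    (hρ.eigenvalues p.2 ^ 2 / (hσ.eigenvalues p.1 + t * hρ.eigenvalues p.2))

lemma re_trace_eq_sum_overlap (hρ : ρ.IsHermitian) (hσ : σ.IsHermitian) :
    ρ.trace.re = ∑ p : n × n, Complex.normSq (overlap hρ hσ p.1 p.2) * hρ.eigenvalues p.2 := by
  simpa only [cfc_const_one ℝ σ hσ.isSelfAdjoint, mul_one] using re_trace_mul_cfc hρ hσ fun _ => 1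

lemma relEntropy_eq_sum (hρ : ρ.IsHermitian) (hσ : σ.IsHermitian) :
    relEntropy ρ σ =
      (∑ p : n × n, Complex.normSq (overlap hρ hσ p.1 p.2) * hρ.eigenvalues p.2 *
          Real.log (hρ.eigenvalues p.2) -
        ∑ p : n × n, Complex.normSq (overlap hρ hσ p.1 p.2) * hρ.eigenvalues p.2 *
          Real.log (hσ.eigenvalues p.1)) / Real.log 2 := by
  have hself : (ρ * cfc (Real.logb 2) ρ).trace.re = ∑ p : n × n,
      Complex.normSq (overlap hρ hσ p.1 p.2) *
        (hρ.eigenvalues p.2 * Real.logb 2 (hρ.eigenvalues p.2)) := by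
    simpa only [mul_cfc_self hρ, cfc_const_one ℝ σ hσ.isSelfAdjoint, mul_one] using
      re_trace_cfc_mul_cfc hρ hσ (fun x => x * Real.logb 2 x) fun _ => 1
  rw [relEntropy, mul_sub, trace_sub, Complex.sub_re, hself, re_trace_mul_cfc hρ hσ, sub_div,
    Finset.sum_div, Finset.sum_div]
  simp only [Real.logb, mul_assoc, mul_div_assoc]

lemma TraceAbsolutelyContinuous.overlap_mul_eigenvalues_eq_zero
    (h : TraceAbsolutelyContinuous ρ σ) (hρ : ρ.PosSemidef) (hσ : σ.IsHermitian) (p : n × n)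
    (hp : hσ.eigenvalues p.1 = 0) :
    Complex.normSq (overlap hρ.1 hσ p.1 p.2) * hρ.1.eigenvalues p.2 = 0 := by
  set δ : ℝ → ℝ := fun x => if x = 0 then 1 else 0 with hδ
  have hδ_nonneg : ∀ x, 0 ≤ δ x := fun x => by simp only [hδ]; split_ifs <;> norm_num
  have hkernel_psd : (cfc δ σ).PosSemidef :=
    nonneg_iff_posSemidef.1 (cfc_nonneg fun x _ => hδ_nonneg x)
  have hkernel : σ * cfc δ σ = 0 := by
    have : (fun x => x * δ x) = fun _ => 0 := by ext x; simp [hδ]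
    rw [mul_cfc_self hσ, this, cfc_const_zero]
  have hsum := re_trace_mul_cfc hρ.1 hσ δ
  rw [h _ hkernel_psd (by rw [hkernel, trace_zero]), Complex.zero_re, eq_comm,
    Finset.sum_eq_zero_iff_of_nonneg fun q _ => mul_nonneg (Complex.normSq_nonneg _)
      (mul_nonneg (hρ.eigenvalues_nonneg _) (hδ_nonneg _))] at hsum
  simpa [hδ, hp] using hsum p (Finset.mem_univ p)

lemma complete_square (y c : ℂ) {r k : ℝ} (hk : k = 0 → r = 0) :
    2 * (r * (star c * y).re) - k * Complex.normSq y =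
      Complex.normSq c * (r ^ 2 / k) - k * Complex.normSq (y - (r / k : ℝ) * c) := by
  rcases eq_or_ne k 0 with rfl | hk₀
  · simp [hk rfl]
  · simp only [Complex.normSq_apply, Complex.star_def, Complex.mul_re, Complex.sub_re,
      Complex.sub_im, Complex.mul_im, Complex.conj_re, Complex.conj_im, Complex.ofReal_re,
      Complex.ofReal_im]
    field_simp
    ring

/-- The matrix of `X` with respect to the eigenbases of `σ` (rows) and `ρ` (columns). -/
def eigenbasisMatrix (hρ : ρ.IsHermitian) (hσ : σ.IsHermitian) (X : Matrix n n ℂ) :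
    Matrix n n ℂ :=
  (hσ.eigenvectorUnitary : Matrix n n ℂ)ᴴ * X * hρ.eigenvectorUnitary

lemma re_trace_mul_eq_sum_overlap (hρ : ρ.IsHermitian) (hσ : σ.IsHermitian) (X : Matrix n n ℂ) :
    (ρ * X).trace.re = ∑ p : n × n, hρ.eigenvalues p.2 *
      (star (overlap hρ hσ p.1 p.2) * eigenbasisMatrix hρ hσ X p.1 p.2).re := by
  have hconj : (hρ.eigenvectorUnitary : Matrix n n ℂ)ᴴ * X * hρ.eigenvectorUnitary =
      (overlap hρ hσ)ᴴ * eigenbasisMatrix hρ hσ X := by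
    simp only [overlap, eigenbasisMatrix, conjTranspose_mul, conjTranspose_conjTranspose,
      mul_assoc, eigenvectorUnitary_mul_conjTranspose_mul]
  rw [trace_mul_eq_sum hρ, hconj, Fintype.sum_prod_type, Finset.sum_comm, Complex.re_sum]
  refine Finset.sum_congr rfl fun i _ => ?_
  rw [mul_apply, Complex.re_ofReal_mul, Complex.re_sum, Finset.mul_sum]
  rfl

lemma re_trace_mul_self_conjTranspose_eq_sum (hρ : ρ.IsHermitian) (hσ : σ.IsHermitian)
    (X : Matrix n n ℂ) :
    (σ * (X * Xᴴ)).trace.re = ∑ p : n × n, hσ.eigenvalues p.1 *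
      Complex.normSq (eigenbasisMatrix hρ hσ X p.1 p.2) := by
  have hconj : (hσ.eigenvectorUnitary : Matrix n n ℂ)ᴴ * (X * Xᴴ) * hσ.eigenvectorUnitary =
      eigenbasisMatrix hρ hσ X * (eigenbasisMatrix hρ hσ X)ᴴ := by
    simp only [eigenbasisMatrix, conjTranspose_mul, conjTranspose_conjTranspose, mul_assoc,
      eigenvectorUnitary_mul_conjTranspose_mul]
  rw [trace_mul_eq_sum hσ, hconj, Fintype.sum_prod_type]
  simp only [mul_conjTranspose_self_apply_self, ← Complex.ofReal_mul, ← Complex.ofReal_sum,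
    Complex.ofReal_re, Finset.mul_sum]

lemma re_trace_mul_conjTranspose_self_eq_sum (hρ : ρ.IsHermitian) (hσ : σ.IsHermitian)
    (X : Matrix n n ℂ) :
    (ρ * (Xᴴ * X)).trace.re = ∑ p : n × n, hρ.eigenvalues p.2 *
      Complex.normSq (eigenbasisMatrix hρ hσ X p.1 p.2) := by
  have hadj (p : n × n) : Complex.normSq (eigenbasisMatrix hρ hσ X p.1 p.2) =
      Complex.normSq (eigenbasisMatrix hσ hρ Xᴴ p.2 p.1) := by
    have : eigenbasisMatrix hσ hρ Xᴴ = (eigenbasisMatrix hρ hσ X)ᴴ := by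
      simp only [eigenbasisMatrix, conjTranspose_mul, conjTranspose_conjTranspose, mul_assoc]
    rw [this, conjTranspose_apply, Complex.star_def, Complex.normSq_conj]
  have hswap := re_trace_mul_self_conjTranspose_eq_sum hσ hρ Xᴴ
  rw [conjTranspose_conjTranspose] at hswap
  simp only [hswap, hadj]
  exact Fintype.sum_equiv (Equiv.prodComm n n) _ _ fun _ => rfl

lemma variationalForm_eq_sum (hρ : ρ.IsHermitian) (hσ : σ.IsHermitian) (t : ℝ)
    (X : Matrix n n ℂ) :
    variationalForm t ρ σ X = ∑ p : n × n,
      (2 * (hρ.eigenvalues p.2 *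
          (star (overlap hρ hσ p.1 p.2) * eigenbasisMatrix hρ hσ X p.1 p.2).re) -
        (hσ.eigenvalues p.1 + t * hρ.eigenvalues p.2) *
          Complex.normSq (eigenbasisMatrix hρ hσ X p.1 p.2)) := by
  rw [variationalForm, re_trace_mul_eq_sum_overlap hρ hσ,
    re_trace_mul_self_conjTranspose_eq_sum hρ hσ, re_trace_mul_conjTranspose_self_eq_sum hρ hσ,
    Finset.mul_sum, Finset.mul_sum, ← Finset.sum_sub_distrib, ← Finset.sum_sub_distrib]
  exact Finset.sum_congr rfl fun p _ => by ring

lemma variationalForm_eq_resolventSum_sub (hρ : ρ.PosSemidef) (hσ : σ.PosSemidef) {t : ℝ}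
    (ht : 0 < t) (X : Matrix n n ℂ) :
    variationalForm t ρ σ X = resolventSum hρ.1 hσ.1 t - ∑ p : n × n,
      (hσ.1.eigenvalues p.1 + t * hρ.1.eigenvalues p.2) *
        Complex.normSq (eigenbasisMatrix hρ.1 hσ.1 X p.1 p.2 -
          (hρ.1.eigenvalues p.2 / (hσ.1.eigenvalues p.1 + t * hρ.1.eigenvalues p.2) : ℝ) *
            overlap hρ.1 hσ.1 p.1 p.2) := by
  rw [variationalForm_eq_sum hρ.1 hσ.1, resolventSum, ← Finset.sum_sub_distrib]
  refine Finset.sum_congr rfl fun p _ => complete_square _ _ fun hk => ?_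
  have hr := hρ.eigenvalues_nonneg p.2
  have hs := hσ.eigenvalues_nonneg p.1
  have htr : t * hρ.1.eigenvalues p.2 = 0 := by
    linarith [mul_nonneg ht.le hr]
  exact (mul_eq_zero.1 htr).resolve_left ht.ne'

theorem isGreatest_variationalForm (hρ : ρ.PosSemidef) (hσ : σ.PosSemidef) {t : ℝ} (ht : 0 < t) :
    IsGreatest (Set.range (variationalForm t ρ σ)) (resolventSum hρ.1 hσ.1 t) := by
  constructor
  · set Y : Matrix n n ℂ := of fun j i => (hρ.1.eigenvalues i /
      (hσ.1.eigenvalues j + t * hρ.1.eigenvalues i) : ℝ) * overlap hρ.1 hσ.1 j i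
    set U := (hρ.1.eigenvectorUnitary : Matrix n n ℂ)
    set V := (hσ.1.eigenvectorUnitary : Matrix n n ℂ)
    have hY : eigenbasisMatrix hρ.1 hσ.1 (V * Y * Uᴴ) = Y := by
      rw [eigenbasisMatrix, mul_assoc V, ← mul_assoc, ← star_eq_conjTranspose,
        ← star_eq_conjTranspose, Unitary.coe_star_mul_self, one_mul, mul_assoc,
        Unitary.coe_star_mul_self, mul_one]
    refine ⟨V * Y * Uᴴ, ?_⟩
    rw [variationalForm_eq_resolventSum_sub hρ hσ ht, hY]
    simp [Y]
  · rintro _ ⟨X, rfl⟩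
    rw [variationalForm_eq_resolventSum_sub hρ hσ ht]
    refine sub_le_self _ (Finset.sum_nonneg fun p _ => mul_nonneg ?_ (Complex.normSq_nonneg _))
    exact add_nonneg (hσ.eigenvalues_nonneg _) (mul_nonneg ht.le (hρ.eigenvalues_nonneg _))

end RelativeEntropy

section DataProcessing

variable {m n : Type*} [Fintype m] [Fintype n] [DecidableEq m] [DecidableEq n]
  {α : Matrix m m ℂ → Matrix n n ℂ} {ρ σ : Matrix n n ℂ} {ρ' σ' : Matrix m m ℂ}

/-- The unital `*`-preserving maps satisfying the Kadison–Schwarz inequality. The dual of a quantum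
channel is of this kind. -/
structure IsKadisonSchwarz (α : Matrix m m ℂ → Matrix n n ℂ) : Prop where
  map_one : α 1 = 1
  map_conjTranspose : ∀ X, α Xᴴ = (α X)ᴴ
  conjTranspose_mul_self_le : ∀ X, (α X)ᴴ * α X ≤ α (Xᴴ * X)

namespace IsKadisonSchwarz

lemma self_mul_conjTranspose_le (hα : IsKadisonSchwarz α) (X : Matrix m m ℂ) :
    α X * (α X)ᴴ ≤ α (X * Xᴴ) := by
  simpa only [hα.map_conjTranspose, conjTranspose_conjTranspose] using
    hα.conjTranspose_mul_self_le Xᴴ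

lemma posSemidef (hα : IsKadisonSchwarz α) {Y : Matrix m m ℂ} (hY : Y.PosSemidef) :
    (α Y).PosSemidef := by
  obtain ⟨Z, rfl⟩ := CStarAlgebra.nonneg_iff_eq_star_mul_self.1 hY.nonneg
  exact nonneg_iff_posSemidef.1 <|
    (posSemidef_conjTranspose_mul_self (α Z)).nonneg.trans (hα.conjTranspose_mul_self_le Z)

end IsKadisonSchwarz

lemma variationalForm_le_of_isKadisonSchwarz (hα : IsKadisonSchwarz α) (hρ : ρ.PosSemidef)
    (hσ : σ.PosSemidef) (hρα : ∀ X, (ρ' * X).trace = (ρ * α X).trace)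
    (hσα : ∀ X, (σ' * X).trace = (σ * α X).trace) {t : ℝ} (ht : 0 ≤ t) (X : Matrix m m ℂ) :
    variationalForm t ρ' σ' X ≤ variationalForm t ρ σ (α X) := by
  rw [variationalForm, variationalForm, hρα, hσα, hρα]
  gcongr 2 * _ - ?_ - t * ?_
  · exact re_trace_mul_le_re_trace_mul hσ (hα.self_mul_conjTranspose_le X)
  · exact re_trace_mul_le_re_trace_mul hρ (hα.conjTranspose_mul_self_le X)

lemma resolventSum_le_of_isKadisonSchwarz (hα : IsKadisonSchwarz α) (hρ : ρ.PosSemidef)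
    (hσ : σ.PosSemidef) (hρ' : ρ'.PosSemidef) (hσ' : σ'.PosSemidef)
    (hρα : ∀ X, (ρ' * X).trace = (ρ * α X).trace)
    (hσα : ∀ X, (σ' * X).trace = (σ * α X).trace) {t : ℝ} (ht : 0 < t) :
    resolventSum hρ'.1 hσ'.1 t ≤ resolventSum hρ.1 hσ.1 t := by
  obtain ⟨X, hX⟩ := (isGreatest_variationalForm hρ' hσ' ht).1
  calc resolventSum hρ'.1 hσ'.1 t = variationalForm t ρ' σ' X := hX.symm
    _ ≤ variationalForm t ρ σ (α X) :=
      variationalForm_le_of_isKadisonSchwarz hα hρ hσ hρα hσα ht.le X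
    _ ≤ resolventSum hρ.1 hσ.1 t :=
      (isGreatest_variationalForm hρ hσ ht).2 (Set.mem_range_self _)

lemma TraceAbsolutelyContinuous.of_isKadisonSchwarz (h : TraceAbsolutelyContinuous ρ σ)
    (hα : IsKadisonSchwarz α) (hρα : ∀ X, (ρ' * X).trace = (ρ * α X).trace)
    (hσα : ∀ X, (σ' * X).trace = (σ * α X).trace) : TraceAbsolutelyContinuous ρ' σ' :=
  fun Y hY hσY => (hρα Y).trans (h _ (hα.posSemidef hY) ((hσα Y).symm.trans hσY))

theorem relEntropy_le_of_isKadisonSchwarz (hα : IsKadisonSchwarz α) (hρ : ρ.PosSemidef)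
    (hσ : σ.PosSemidef) (hρ' : ρ'.PosSemidef) (hσ' : σ'.PosSemidef)
    (hρσ : TraceAbsolutelyContinuous ρ σ) (hρα : ∀ X, (ρ' * X).trace = (ρ * α X).trace)
    (hσα : ∀ X, (σ' * X).trace = (σ * α X).trace) : relEntropy ρ' σ' ≤ relEntropy ρ σ := by
  have hmass : ρ'.trace.re = ρ.trace.re := by simpa [hα.map_one] using congrArg Complex.re (hρα 1)
  rw [re_trace_eq_sum_overlap hρ'.1 hσ'.1, re_trace_eq_sum_overlap hρ.1 hσ.1] at hmass
  rw [relEntropy_eq_sum hρ'.1 hσ'.1, relEntropy_eq_sum hρ.1 hσ.1]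
  refine div_le_div_of_nonneg_right ?_ (Real.log_nonneg one_le_two)
  exact sum_mul_log_sub_le_of_resolvent_le
    (fun p => hρ.eigenvalues_nonneg p.2) (fun p => hσ.eigenvalues_nonneg p.1)
    (hρσ.overlap_mul_eigenvalues_eq_zero hρ hσ.1)
    (fun p => hρ'.eigenvalues_nonneg p.2) (fun p => hσ'.eigenvalues_nonneg p.1)
    ((hρσ.of_isKadisonSchwarz hα hρα hσα).overlap_mul_eigenvalues_eq_zero hρ' hσ'.1) hmass
    fun t ht => resolventSum_le_of_isKadisonSchwarz hα hρ hσ hρ' hσ' hρα hσα ht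

end DataProcessing

section Dephasing

variable {A B : Type*}

/-- The `a`-th diagonal block `(⟨a| ⊗ 1) ρ (|a⟩ ⊗ 1)`, which is `p_a • ρ_{B|a}`. -/
def diagBlock (ρ : Matrix (A × B) (A × B) ℂ) (a : A) : Matrix B B ℂ :=
  ρ.submatrix (Prod.mk a) (Prod.mk a)

variable [Fintype B] [DecidableEq B]

lemma probA_mul_vnEntropy_condB_s9 {ρ : Matrix (A × B) (A × B) ℂ} (hρ : ρ.PosSemidef) (a : A) :
    probA ρ a * vnEntropy (condB ρ a) =
      vnEntropy (diagBlock ρ a) + probA ρ a * Real.logb 2 (probA ρ a) := by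
  have hblock : (diagBlock ρ a).PosSemidef := hρ.submatrix _
  have hprob : (diagBlock ρ a).trace.re = probA ρ a := rfl
  rcases eq_or_ne (probA ρ a) 0 with hp | hp
  · have hzero : diagBlock ρ a = 0 := hblock.trace_eq_zero_iff.1 <|
      Complex.ext (hprob.trans hp) (Complex.nonneg_iff.1 hblock.trace_nonneg).2.symm
    have hentropy : vnEntropy (diagBlock ρ a) = 0 := by
      simpa [hzero] using vnEntropy_smul_s9 hblock.1 0
    rw [hp, hentropy, zero_mul, zero_mul, add_zero]
  · have hcond : condB ρ a = (probA ρ a)⁻¹ • diagBlock ρ a := by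
      ext b b'
      simp [condB, diagBlock]
    rw [hcond, vnEntropy_smul_s9 hblock.1, hprob, Real.logb_inv]
    field_simp
    ring

variable [Fintype A] [DecidableEq A]

/-- The block-diagonal matrix `∑ a, |a⟩⟨a| ⊗ M a`, as an algebra homomorphism in `M`. Mathlib's
`Matrix.blockDiagonal` has the block index as second coordinate. -/
def blockDiagonalFst : (A → Matrix B B ℂ) →ₐ[ℝ] Matrix (A × B) (A × B) ℂ :=
  (reindexAlgEquiv ℝ ℂ (Equiv.prodComm B A)).toAlgHom.comp
    { blockDiagonalRingHom B A ℂ with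
      commutes' := fun c => by
        ext ⟨i, k⟩ ⟨j, l⟩
        simp [blockDiagonal_apply, algebraMap_matrix_apply, Prod.ext_iff, ite_and, and_comm] }

lemma blockDiagonalFst_apply (M : A → Matrix B B ℂ) (p q : A × B) :
    blockDiagonalFst M p q = if p.1 = q.1 then M p.1 p.2 q.2 else 0 := by
  simp [blockDiagonalFst, blockDiagonal_apply]

lemma dephA_eq_blockDiagonalFst (ρ : Matrix (A × B) (A × B) ℂ) :
    dephA ρ = blockDiagonalFst (diagBlock ρ) := by
  ext ⟨a, b⟩ ⟨a', b'⟩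
  rw [blockDiagonalFst_apply]
  by_cases h : a = a' <;> simp [dephA, diagBlock, h]

lemma isHermitian_blockDiagonalFst {M : A → Matrix B B ℂ} (hM : ∀ a, (M a).IsHermitian) :
    (blockDiagonalFst M).IsHermitian := by
  ext ⟨a, b⟩ ⟨a', b'⟩
  rw [conjTranspose_apply, blockDiagonalFst_apply, blockDiagonalFst_apply]
  by_cases h : a = a'
  · subst h
    simpa using (hM a).apply b b'
  · simp [h, Ne.symm h]

lemma cfc_blockDiagonalFst {M : A → Matrix B B ℂ} (hM : ∀ a, (M a).IsHermitian) (f : ℝ → ℝ) :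
    cfc f (blockDiagonalFst M) = blockDiagonalFst fun a => cfc f (M a) := by
  have hfin : (spectrum ℝ (blockDiagonalFst M) ∪ ⋃ a, spectrum ℝ (M a)).Finite :=
    finite_real_spectrum.union (Set.finite_iUnion fun a => finite_real_spectrum)
  set q := Lagrange.interpolate hfin.toFinset id f
  have hq : ∀ x ∈ hfin.toFinset, f x = q.eval x := fun x hx =>
    (Lagrange.eval_interpolate_at_node f (Set.injOn_id _) hx).symm
  have hblock (a : A) : cfc f (M a) = Polynomial.aeval (M a) q :=
    cfc_eq_aeval (hM a) fun x hx =>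
      hq x (hfin.mem_toFinset.2 (.inr (Set.mem_iUnion_of_mem a hx)))
  calc cfc f (blockDiagonalFst M) = Polynomial.aeval (blockDiagonalFst M) q :=
        cfc_eq_aeval (isHermitian_blockDiagonalFst hM) fun x hx =>
          hq x (hfin.mem_toFinset.2 (.inl hx))
    _ = blockDiagonalFst (Polynomial.aeval M q) := Polynomial.aeval_algHom_apply _ _ _
    _ = blockDiagonalFst fun a => cfc f (M a) := by
      congr 1
      ext1 a
      rw [hblock]
      exact (Polynomial.aeval_algHom_apply (Pi.evalAlgHom ℝ _ a) M q).symm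

lemma trace_mul_blockDiagonalFst (ρ : Matrix (A × B) (A × B) ℂ) (N : A → Matrix B B ℂ) :
    (ρ * blockDiagonalFst N).trace = ∑ a, (diagBlock ρ a * N a).trace := by
  simp only [trace, diag_apply, mul_apply, blockDiagonalFst_apply, Fintype.sum_prod_type, diagBlock,
    submatrix_apply]
  refine Finset.sum_congr rfl fun a _ => Finset.sum_congr rfl fun b _ => ?_
  rw [Finset.sum_eq_single_of_mem a (Finset.mem_univ a)]
  · simp
  · intro c _ hc
    simp [hc]

lemma relEntropy_dephA {ρ : Matrix (A × B) (A × B) ℂ} (hρ : ρ.IsHermitian) :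
    relEntropy ρ (dephA ρ) = ∑ a, vnEntropy (diagBlock ρ a) - vnEntropy ρ := by
  have hblock (a : A) : (diagBlock ρ a).IsHermitian := hρ.submatrix _
  have hsum : (ρ * cfc (Real.logb 2) (dephA ρ)).trace.re = -∑ a, vnEntropy (diagBlock ρ a) := by
    rw [dephA_eq_blockDiagonalFst, cfc_blockDiagonalFst hblock, trace_mul_blockDiagonalFst,
      Complex.re_sum, ← Finset.sum_neg_distrib]
    refine Finset.sum_congr rfl fun a _ => ?_
    rw [vnEntropy_eq_neg_re_trace_mul_cfc_logb (hblock a), neg_neg]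
  rw [relEntropy, mul_sub, trace_sub, Complex.sub_re, hsum,
    vnEntropy_eq_neg_re_trace_mul_cfc_logb hρ]
  ring

lemma QDI_eq_relEntropy {ρ : Matrix (A × B) (A × B) ℂ} (hρ : ρ.PosSemidef) :
    QDI ρ = relEntropy ρ (dephA ρ) + vnEntropy (ptrB ρ) +
      ∑ a, probA ρ a * Real.logb 2 (probA ρ a) := by
  simp only [QDI, relEntropy_dephA hρ.1, probA_mul_vnEntropy_condB_s9 hρ, Finset.sum_add_distrib]
  ring

end Dephasing

section Pinching

variable {A B : Type*} [DecidableEq A]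

/-- The projection `|a⟩⟨a| ⊗ 1`. -/
def blockProj (B : Type*) [DecidableEq B] (a : A) : Matrix (A × B) (A × B) ℂ :=
  diagonal fun p => if p.1 = a then 1 else 0

lemma conjTranspose_blockProj [DecidableEq B] (a : A) : (blockProj B a)ᴴ = blockProj B a := by
  rw [blockProj, diagonal_conjTranspose]
  congr 1
  ext p
  simp only [Pi.star_apply, apply_ite star, star_one, star_zero]

lemma sum_blockProj [DecidableEq B] [Fintype A] : ∑ a : A, blockProj B a = 1 := by
  ext p q
  by_cases h : p = q <;> simp [blockProj, Matrix.sum_apply, one_apply, h]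

lemma dephA_eq_sum_blockProj [DecidableEq B] [Fintype A] [Fintype B]
    (ρ : Matrix (A × B) (A × B) ℂ) :
    dephA ρ = ∑ a, (blockProj B a)ᴴ * ρ * blockProj B a := by
  ext p q
  simp_rw [conjTranspose_blockProj]
  simp [dephA, blockProj, Matrix.sum_apply, eq_comm]

lemma posSemidef_dephA [Finite A] [Finite B] {ρ : Matrix (A × B) (A × B) ℂ}
    (hρ : ρ.PosSemidef) : (dephA ρ).PosSemidef := by
  classical
  cases nonempty_fintype A
  cases nonempty_fintype B
  rw [dephA_eq_sum_blockProj]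
  exact posSemidef_sum _ fun a _ => hρ.conjTranspose_mul_mul_same _

lemma traceAbsolutelyContinuous_dephA [Fintype A] [Fintype B] {ρ : Matrix (A × B) (A × B) ℂ}
    (hρ : ρ.PosSemidef) : TraceAbsolutelyContinuous ρ (dephA ρ) := by
  classical
  intro Y hY hzero
  obtain ⟨R, rfl⟩ := CStarAlgebra.nonneg_iff_eq_star_mul_self.1 hρ.nonneg
  obtain ⟨W, rfl⟩ := CStarAlgebra.nonneg_iff_eq_star_mul_self.1 hY.nonneg
  simp only [star_eq_conjTranspose] at hzero ⊢
  have hterm (a : A) : ((blockProj B a)ᴴ * (Rᴴ * R) * blockProj B a * (Wᴴ * W)).trace =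
      ((R * blockProj B a * Wᴴ)ᴴ * (R * blockProj B a * Wᴴ)).trace := by
    rw [← mul_assoc, trace_mul_comm]
    simp only [conjTranspose_mul, conjTranspose_conjTranspose, mul_assoc]
  have hvanish (a : A) : R * blockProj B a * Wᴴ = 0 := by
    rw [dephA_eq_sum_blockProj, Finset.sum_mul, trace_sum] at hzero
    simp only [hterm] at hzero
    rw [Finset.sum_eq_zero_iff_of_nonneg fun b _ =>
      (posSemidef_conjTranspose_mul_self _).trace_nonneg] at hzero
    exact trace_conjTranspose_mul_self_eq_zero_iff.1 (hzero a (Finset.mem_univ a))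
  have hRW : R * Wᴴ = 0 := by
    rw [← mul_one R, ← sum_blockProj, Finset.mul_sum, Finset.sum_mul]
    exact Finset.sum_eq_zero fun a _ => hvanish a
  rw [← mul_assoc, mul_assoc Rᴴ, hRW, mul_zero, zero_mul, trace_zero]

end Pinching

section PartialTrace

variable {A B B' : Type*}

/-- The ampliation `X ↦ X ⊗ 1` from `A × B` to `A × B × B'`; it is dual to `ptrB2`. -/
def ampliation (B' : Type*) [DecidableEq B'] (X : Matrix (A × B) (A × B) ℂ) :
    Matrix (A × B × B') (A × B × B') ℂ :=
  (X ⊗ₖ (1 : Matrix B' B' ℂ)).submatrix (Equiv.prodAssoc A B B').symm (Equiv.prodAssoc A B B').symm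

lemma conjTranspose_ampliation [DecidableEq B'] (X : Matrix (A × B) (A × B) ℂ) :
    ampliation B' Xᴴ = (ampliation B' X)ᴴ := by
  rw [ampliation, ampliation, conjTranspose_submatrix, conjTranspose_kronecker, conjTranspose_one]

variable [Fintype B']

lemma dephA_ptrB2 [DecidableEq A] (ρ : Matrix (A × B × B') (A × B × B') ℂ) :
    dephA (ptrB2 ρ) = ptrB2 (dephA ρ) := by
  ext p q
  by_cases h : p.1 = q.1 <;> simp [dephA, ptrB2, h]

lemma posSemidef_ptrB2 {ρ : Matrix (A × B × B') (A × B × B') ℂ} (hρ : ρ.PosSemidef) :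
    (ptrB2 ρ).PosSemidef := by
  have hsum : ptrB2 ρ = ∑ c, ρ.submatrix (fun p : A × B => (p.1, p.2, c))
      fun p => (p.1, p.2, c) := by
    ext p q
    simp [ptrB2, Matrix.sum_apply]
  rw [hsum]
  exact posSemidef_sum _ fun c _ => hρ.submatrix _

lemma probA_ptrB2 [Fintype B] (ρ : Matrix (A × B × B') (A × B × B') ℂ) :
    probA (ptrB2 ρ) = probA ρ := by
  ext a
  simp [probA, ptrB2, Fintype.sum_prod_type]

lemma ptrB_ptrB2 [Fintype B] (ρ : Matrix (A × B × B') (A × B × B') ℂ) :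
    ptrB (ptrB2 ρ) = ptrB ρ := by
  ext a a'
  simp [ptrB, ptrB2, Fintype.sum_prod_type]

variable [DecidableEq B'] [Fintype A] [Fintype B]

lemma ampliation_mul (X Y : Matrix (A × B) (A × B) ℂ) :
    ampliation B' (X * Y) = ampliation B' X * ampliation B' Y := by
  rw [ampliation, ampliation, ampliation, submatrix_mul_equiv, ← mul_kronecker_mul, one_mul]

lemma trace_ptrB2_mul (ρ : Matrix (A × B × B') (A × B × B') ℂ) (X : Matrix (A × B) (A × B) ℂ) :
    (ptrB2 ρ * X).trace = (ρ * ampliation B' X).trace := by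
  simp only [trace, diag_apply, mul_apply, ptrB2, of_apply, ampliation, submatrix_apply,
    kroneckerMap_apply, Equiv.prodAssoc_symm_apply, Fintype.sum_prod_type, one_apply, mul_ite,
    mul_one, mul_zero, Finset.sum_ite_eq', Finset.mem_univ, if_true, Finset.sum_mul]
  refine Finset.sum_congr rfl fun a _ => Finset.sum_congr rfl fun b _ => ?_
  rw [eq_comm, Finset.sum_comm]
  exact Finset.sum_congr rfl fun a' _ => Finset.sum_comm

variable [DecidableEq A] [DecidableEq B]

lemma isKadisonSchwarz_ampliation :
    IsKadisonSchwarz (ampliation B' : Matrix (A × B) (A × B) ℂ → _) where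
  map_one := by rw [ampliation, one_kronecker_one, submatrix_one_equiv]
  map_conjTranspose := conjTranspose_ampliation
  conjTranspose_mul_self_le X := by rw [ampliation_mul, conjTranspose_ampliation]

theorem stmt9_general (ρ : Matrix (A × B × B') (A × B × B') ℂ) (hρ : ρ.PosSemidef) :
    QDI (ptrB2 ρ) ≤ QDI ρ := by
  rw [QDI_eq_relEntropy (posSemidef_ptrB2 hρ), QDI_eq_relEntropy hρ, ptrB_ptrB2, probA_ptrB2,
    dephA_ptrB2]
  gcongr
  exact relEntropy_le_of_isKadisonSchwarz isKadisonSchwarz_ampliation hρ (posSemidef_dephA hρ)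
    (posSemidef_ptrB2 hρ) (posSemidef_ptrB2 (posSemidef_dephA hρ))
    (traceAbsolutelyContinuous_dephA hρ) (trace_ptrB2_mul ρ) (trace_ptrB2_mul (dephA ρ))

end PartialTrace

/-- discarding a subsystem `B'` on the unmeasured side does not increase the
QDI measured on `A`: `D_{BB'|A}(ρ_ABB') ≥ D_{B|A}(tr_{B'} ρ_ABB')`. -/
theorem stmt9 {dA dB dB' : ℕ}
    (ρ : Matrix (Fin dA × Fin dB × Fin dB') (Fin dA × Fin dB × Fin dB') ℂ)
    (hρ : IsDensityMatrix ρ) :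
    QDI (ptrB2 ρ) ≤ QDI ρ :=
  stmt9_general ρ hρ.1
end
end

section
/- Let |Ψ⟩ = (|00⟩ + |01⟩ + |10⟩ − |11⟩)/2 ∈ ℂ²⊗ℂ² (this is the maximally entangled state (|+0⟩+|−1⟩)/√2 with |±⟩ = (|0⟩±|1⟩)/√2) and let ρ^m_AB = |Ψ⟩⟨Ψ|. Then D_{B|A}(ρ^m_AB) = 1 and D_{B|A}((id_A⊗Δ_B)(ρ^m_AB)) = 1; in particular, the completely dephasing map on B causes an equal decrease in the total correlation and in the incoherent correlation. -/
open Matrix Kronecker BigOperators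
open scoped ComplexOrder

noncomputable section

/-- The maximally entangled state `|Ψ⟩ = (|00⟩+|01⟩+|10⟩−|11⟩)/2 = (|+0⟩+|−1⟩)/√2`. -/
def PsiM : Fin 2 × Fin 2 → ℂ :=
  fun p => if p = (1, 1) then -(1 / 2) else (1 / 2)

/-!
A matrix and its adjoint, multiplied in either order, have the same nonzero spectrum, and
`λ log₂ λ` vanishes at `λ = 0`; so `S(M Mᴴ) = S(Mᴴ M)` for rectangular `M`. Taking for `M` a column
vector, pure states have entropy `0`, so the discord of a pure state is its entanglement entropy
`S(ρ_A)`. Taking for `M` the matrix that maps `|b⟩` to the component of `|ψ⟩` in `A ⊗ |b⟩`, the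
dephased pure state has the entropy of the outcome distribution of `B`. Dephasing `B` does not
change `ρ_A`, so it costs a pure state exactly the mutual information between the incoherent
measurement outcomes of `A` and `B`. For `Ψ` these outcomes are independent, so both discords equal
`S(ρ_A)`, and `ρ_A` is maximally mixed on a qubit.
-/

section Entropy

variable {m n : Type*} [Fintype m] [DecidableEq m] [Fintype n] [DecidableEq n]

theorem vnEntropy_eq_neg_sum_roots_charpoly {ρ : Matrix n n ℂ} (hρ : ρ.IsHermitian) :
    vnEntropy ρ = -(ρ.charpoly.roots.map fun z => z.re * Real.logb 2 z.re).sum := by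
  simp [vnEntropy, hρ, hρ.roots_charpoly_eq_eigenvalues]

theorem vnEntropy_diagonal_ofReal (p : n → ℝ) :
    vnEntropy (diagonal fun i => (p i : ℂ)) = -∑ i, p i * Real.logb 2 (p i) := by
  have hermitian : (diagonal fun i => (p i : ℂ)).IsHermitian :=
    isHermitian_diagonal_of_self_adjoint _ (by ext i; simp)
  have roots_eq : (diagonal fun i => (p i : ℂ)).charpoly.roots =
      Finset.univ.val.map fun i => (p i : ℂ) := by
    simpa [charpoly_diagonal] using
      Polynomial.roots_multiset_prod_X_sub_C (Finset.univ.val.map fun i => (p i : ℂ))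
  rw [vnEntropy_eq_neg_sum_roots_charpoly hermitian, roots_eq]
  simp

theorem vnEntropy_mul_conjTranspose_self (M : Matrix m n ℂ) :
    vnEntropy (M * Mᴴ) = vnEntropy (Mᴴ * M) := by
  have roots_eq : Fintype.card n • {0} + (M * Mᴴ).charpoly.roots =
      Fintype.card m • {0} + (Mᴴ * M).charpoly.roots := by
    have := congrArg Polynomial.roots (charpoly_mul_comm' M Mᴴ)
    rwa [Polynomial.roots_mul (mul_ne_zero (by simp) (charpoly_monic _).ne_zero),
      Polynomial.roots_mul (mul_ne_zero (by simp) (charpoly_monic _).ne_zero),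
      Polynomial.roots_X_pow, Polynomial.roots_X_pow] at this
  have sum_eq := congrArg
    (fun s : Multiset ℂ => (s.map fun z => z.re * Real.logb 2 z.re).sum) roots_eq
  rw [vnEntropy_eq_neg_sum_roots_charpoly (isHermitian_mul_conjTranspose_self M),
    vnEntropy_eq_neg_sum_roots_charpoly (isHermitian_conjTranspose_mul_self M), neg_inj]
  simpa [Multiset.map_nsmul, Multiset.sum_nsmul] using sum_eq

end Entropy

section Measurement

variable {A B : Type*} [Fintype B]

theorem sum_probA [Fintype A] (ρ : Matrix (A × B) (A × B) ℂ) :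
    ∑ i, probA ρ i = ρ.trace.re := by
  simp [probA, trace, Fintype.sum_prod_type]

variable {ρ : Matrix (A × B) (A × B) ℂ}

theorem ofReal_probA (hρ : ρ.IsHermitian) (i : A) :
    (probA ρ i : ℂ) = ∑ b, ρ (i, b) (i, b) := by
  rw [probA, Complex.re_sum, Complex.ofReal_sum]
  exact Finset.sum_congr rfl fun b _ => hρ.coe_re_apply_self (i, b)

theorem trace_condB (hρ : ρ.IsHermitian) {i : A} (hi : probA ρ i ≠ 0) :
    (condB ρ i).trace = 1 := by
  have trace_eq : (condB ρ i).trace = (probA ρ i : ℂ)⁻¹ * ∑ b, ρ (i, b) (i, b) := by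
    simp [condB, trace, Finset.mul_sum]
  rw [trace_eq, ← ofReal_probA hρ, inv_mul_cancel₀ (Complex.ofReal_ne_zero.mpr hi)]

end Measurement

section Dephasing

variable {A B : Type*} [Fintype B] [DecidableEq B] (ρ : Matrix (A × B) (A × B) ℂ)

theorem ptrB_dephB : ptrB (dephB ρ) = ptrB ρ := by
  simp [ptrB, dephB]

theorem probA_dephB (i : A) : probA (dephB ρ) i = probA ρ i := by
  simp [probA, dephB]

theorem condB_dephB (i : A) : condB (dephB ρ) i = deph (condB ρ i) := by
  ext b b'
  rw [condB, probA_dephB]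
  simp [condB, dephB, deph]

end Dephasing

/-- The rank-one operator `|ψ⟩⟨ψ|`, which is a pure state when `ψ` is a unit vector. It is kept
reducible so that lemmas about it apply to `vecMulVec ψ (star ψ)` itself. -/
abbrev pureState {n : Type*} (ψ : n → ℂ) : Matrix n n ℂ :=
  vecMulVec ψ (star ψ)

theorem isHermitian_pureState {n : Type*} (ψ : n → ℂ) : (pureState ψ).IsHermitian := by
  rw [IsHermitian, conjTranspose_vecMulVec, star_star]

theorem vnEntropy_pureState {n : Type*} [Fintype n] [DecidableEq n] {ψ : n → ℂ}
    (hψ : star ψ ⬝ᵥ ψ = 1) : vnEntropy (pureState ψ) = 0 := by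
  have gram : (replicateCol Unit ψ)ᴴ * replicateCol Unit ψ = diagonal fun _ => ((1 : ℝ) : ℂ) := by
    ext
    simpa [mul_apply, dotProduct] using hψ
  rw [pureState, vecMulVec_eq Unit, ← conjTranspose_replicateCol, vnEntropy_mul_conjTranspose_self,
    gram, vnEntropy_diagonal_ofReal]
  simp

section PureState

variable {A B : Type*} [Fintype B]

theorem probA_pureState_nonneg (ψ : A × B → ℂ) (i : A) : 0 ≤ probA (pureState ψ) i := by
  simp [probA, vecMulVec_apply, Complex.mul_conj, Finset.sum_nonneg, Complex.normSq_nonneg]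

theorem condB_pureState (ψ : A × B → ℂ) (i : A) :
    condB (pureState ψ) i =
      pureState fun b => (√(probA (pureState ψ) i)⁻¹ : ℂ) * ψ (i, b) := by
  have sqrt_inv_mul_self : (√(probA (pureState ψ) i)⁻¹ : ℂ) * (√(probA (pureState ψ) i)⁻¹ : ℂ) =
      (probA (pureState ψ) i : ℂ)⁻¹ := by
    rw [← Complex.ofReal_mul, Real.mul_self_sqrt (inv_nonneg.mpr (probA_pureState_nonneg ψ i)),
      Complex.ofReal_inv]
  ext b b'
  simp only [condB, vecMulVec_apply, ← sqrt_inv_mul_self, Matrix.smul_apply, of_apply,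
    smul_eq_mul, Pi.star_apply, star_mul', RCLike.star_def, Complex.conj_ofReal]
  ring

variable [DecidableEq B]

theorem vnEntropy_condB_pureState {ψ : A × B → ℂ} {i : A}
    (hi : probA (pureState ψ) i ≠ 0) : vnEntropy (condB (pureState ψ) i) = 0 := by
  have trace_eq_one := trace_condB (isHermitian_pureState ψ) hi
  rw [condB_pureState] at trace_eq_one ⊢
  apply vnEntropy_pureState
  rwa [dotProduct_comm, ← trace_vecMulVec]

variable [Fintype A] [DecidableEq A]

theorem QDI_pureState {ψ : A × B → ℂ} (hψ : star ψ ⬝ᵥ ψ = 1) :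
    QDI (pureState ψ) = vnEntropy (ptrB (pureState ψ)) := by
  have cond_term (i : A) : probA (pureState ψ) i * vnEntropy (condB (pureState ψ) i) = 0 :=
    mul_eq_zero.mpr (or_iff_not_imp_left.mpr vnEntropy_condB_pureState)
  simp [QDI, cond_term, vnEntropy_pureState hψ]

theorem vnEntropy_dephB_pureState (ψ : A × B → ℂ) :
    vnEntropy (dephB (pureState ψ)) = vnEntropy (deph (ptrA (pureState ψ))) := by
  let M : Matrix (A × B) B ℂ := of fun p b => if p.2 = b then ψ p else 0
  have mul_adjoint : M * Mᴴ = dephB (pureState ψ) := by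
    ext p q
    by_cases h : p.2 = q.2 <;> simp [M, mul_apply, dephB, vecMulVec_apply, apply_ite, h, eq_comm]
  have adjoint_mul : Mᴴ * M = deph (ptrA (pureState ψ)) := by
    ext b b'
    by_cases h : b = b' <;>
      simp [M, mul_apply, deph, ptrA, vecMulVec_apply, apply_ite, Fintype.sum_prod_type, h,
        Ne.symm, mul_comm]
  rw [← mul_adjoint, ← adjoint_mul, vnEntropy_mul_conjTranspose_self]

theorem QDI_dephB_pureState (ψ : A × B → ℂ) :
    QDI (dephB (pureState ψ)) =
      (∑ i, probA (pureState ψ) i * vnEntropy (deph (condB (pureState ψ) i))) +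
        vnEntropy (ptrB (pureState ψ)) - vnEntropy (deph (ptrA (pureState ψ))) := by
  simp only [QDI, probA_dephB, condB_dephB, ptrB_dephB, vnEntropy_dephB_pureState]

theorem QDI_dephB_pureState_eq_of_deph_condB_eq {ψ : A × B → ℂ} (hψ : star ψ ⬝ᵥ ψ = 1)
    (indep : ∀ i, probA (pureState ψ) i ≠ 0 →
      deph (condB (pureState ψ) i) = deph (ptrA (pureState ψ))) :
    QDI (dephB (pureState ψ)) = QDI (pureState ψ) := by
  have sum_probA_eq_one : ∑ i, probA (pureState ψ) i = 1 := by
    rw [sum_probA, trace_vecMulVec, dotProduct_comm, hψ, Complex.one_re]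
  have cond_term (i : A) :
      probA (pureState ψ) i * vnEntropy (deph (condB (pureState ψ) i)) =
        probA (pureState ψ) i * vnEntropy (deph (ptrA (pureState ψ))) :=
    mul_eq_mul_left_iff.mpr (or_iff_not_imp_right.mpr fun hi => by rw [indep i hi])
  rw [QDI_dephB_pureState, QDI_pureState hψ, Finset.sum_congr rfl fun i _ => cond_term i,
    ← Finset.sum_mul, sum_probA_eq_one]
  ring

end PureState

theorem pureState_PsiM_apply_self (p : Fin 2 × Fin 2) : pureState PsiM p p = 1 / 4 := by
  by_cases hp : p = (1, 1) <;> norm_num [vecMulVec_apply, PsiM, hp]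

theorem star_PsiM_dotProduct_PsiM : star PsiM ⬝ᵥ PsiM = 1 := by
  rw [dotProduct_comm, ← trace_vecMulVec]
  simp [trace, pureState_PsiM_apply_self]

theorem ptrB_pureState_PsiM : ptrB (pureState PsiM) = diagonal fun _ => ((1 / 2 : ℝ) : ℂ) := by
  ext a a'
  fin_cases a <;> fin_cases a' <;>
    norm_num [ptrB, vecMulVec_apply, PsiM, Complex.conj_ofNat]

theorem vnEntropy_ptrB_pureState_PsiM : vnEntropy (ptrB (pureState PsiM)) = 1 := by
  rw [ptrB_pureState_PsiM, vnEntropy_diagonal_ofReal]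
  simp

theorem deph_condB_pureState_PsiM (i : Fin 2) :
    deph (condB (pureState PsiM) i) = deph (ptrA (pureState PsiM)) := by
  have prob_eq : probA (pureState PsiM) i = 1 / 2 := by
    norm_num [probA, pureState_PsiM_apply_self]
  ext b b'
  by_cases h : b = b'
  · norm_num [deph, condB, prob_eq, ptrA, pureState_PsiM_apply_self, h]
  · simp [deph, h]

/-- for `ρ^m = |Ψ⟩⟨Ψ|`, `D_{B|A}(ρ^m) = 1` and
`D_{B|A}((id⊗Δ_B)(ρ^m)) = 1`. -/
theorem stmt12 :
    QDI (Matrix.vecMulVec PsiM (star PsiM)) = 1 ∧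
      QDI (dephB (Matrix.vecMulVec PsiM (star PsiM))) = 1 := by
  have QDI_pure : QDI (pureState PsiM) = 1 := by
    rw [QDI_pureState star_PsiM_dotProduct_PsiM, vnEntropy_ptrB_pureState_PsiM]
  have QDI_dephased : QDI (dephB (pureState PsiM)) = QDI (pureState PsiM) :=
    QDI_dephB_pureState_eq_of_deph_condB_eq star_PsiM_dotProduct_PsiM
      fun i _ => deph_condB_pureState_PsiM i
  exact ⟨QDI_pure, QDI_dephased.trans QDI_pure⟩
end
end

section
/- Let ρ^GHZ_ABB' = |GHZ⟩⟨GHZ| with |GHZ⟩ = (|000⟩ + |111⟩)/√2 ∈ ℂ²⊗ℂ²⊗ℂ². Then D_{B|A}(ρ^GHZ_AB) + D_{B'|A}(ρ^GHZ_AB') − D_{BB'|A}(ρ^GHZ_ABB') = −1, where ρ^GHZ_AB = tr_{B'}(ρ^GHZ_ABB') and ρ^GHZ_AB' = tr_B(ρ^GHZ_ABB'). In particular the monogamy relation for QDI fails for the GHZ state. -/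
open Matrix Kronecker BigOperators
open scoped ComplexOrder

noncomputable section

/-- The GHZ state `|GHZ⟩ = (|000⟩ + |111⟩)/√2`. -/
def ghzVec : Fin 2 × Fin 2 × Fin 2 → ℂ :=
  fun p => if p = (0, 0, 0) ∨ p = (1, 1, 1) then ((Real.sqrt 2 : ℝ) : ℂ)⁻¹ else 0

/-!
A pure state stays pure after measuring `A`, and pure states have zero entropy, so the QDI of a pure
state is `S(ρ_A)`. For a diagonal state the entropies are Shannon entropies, and the QDI vanishes by
the chain rule. The two-party reductions of a GHZ-type state `∑ i, α i |iii⟩` are diagonal while the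
state itself is pure, so the discords `0 + 0 - S(ρ_A)` add up to `-H(|α|²)`, which is `-1` for two
equal amplitudes.
-/

section Entropy

variable {n : Type*} [Fintype n]

/-- The Shannon entropy in bits of the weights `p`, used for the von Neumann entropy of diagonal
states. The weights need not sum to one, and `0 * log₂ 0 = 0` holds in any case. -/
def shannonEntropy (p : n → ℝ) : ℝ :=
  -∑ i, p i * Real.logb 2 (p i)

theorem shannonEntropy_uniform [Nonempty n] :
    shannonEntropy (fun _ : n => (Fintype.card n : ℝ)⁻¹) = Real.logb 2 (Fintype.card n) := by
  simp [shannonEntropy, Real.logb_inv]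

theorem sum_mul_shannonEntropy_normalize {q : n → ℝ} (hq : 0 ≤ q) :
    (∑ j, q j) * shannonEntropy (fun i => (∑ j, q j)⁻¹ * q i) =
      shannonEntropy q + (∑ j, q j) * Real.logb 2 (∑ j, q j) := by
  by_cases hs : ∑ j, q j = 0
  · have hq0 : q = 0 := (Fintype.sum_eq_zero_iff_of_nonneg hq).mp hs
    simp [shannonEntropy, hq0]
  · have hterm (i : n) : (∑ j, q j) * ((∑ j, q j)⁻¹ * q i * Real.logb 2 ((∑ j, q j)⁻¹ * q i)) =
        q i * Real.logb 2 (q i) - q i * Real.logb 2 (∑ j, q j) := by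
      rcases eq_or_ne (q i) 0 with hi | hi
      · simp [hi]
      · rw [Real.logb_mul (inv_ne_zero hs) hi, Real.logb_inv]
        field_simp
        ring
    rw [shannonEntropy, mul_neg, Finset.mul_sum, Finset.sum_congr rfl fun i _ => hterm i,
      Finset.sum_sub_distrib, ← Finset.sum_mul, shannonEntropy]
    ring

theorem shannonEntropy_chain_rule {m : Type*} [Fintype m] {r : m × n → ℝ} (hr : 0 ≤ r) :
    ∑ a, (∑ b, r (a, b)) * shannonEntropy (fun b => (∑ b', r (a, b'))⁻¹ * r (a, b)) +
      shannonEntropy (fun a => ∑ b, r (a, b)) = shannonEntropy r := by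
  have hrow (a : m) := sum_mul_shannonEntropy_normalize (q := fun b => r (a, b)) fun b => hr (a, b)
  simp only [hrow, Finset.sum_add_distrib]
  simp only [shannonEntropy, Fintype.sum_prod_type, Finset.sum_neg_distrib]
  ring

-- The case `v = 0` is covered by `0⁻¹ = 0`; it occurs for measurement outcomes of probability zero.
theorem isStarProjection_inv_smul_vecMulVec_star {K : Type*} [Field K] [StarRing K] (v : n → K) :
    IsStarProjection ((star v ⬝ᵥ v)⁻¹ • vecMulVec v (star v)) where
  isIdempotentElem := by
    rw [IsIdempotentElem, smul_mul_smul_comm, vecMulVec_mul_vecMulVec, vecMulVec_smul, smul_smul]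
    congr 1
    rcases eq_or_ne (star v ⬝ᵥ v) 0 with h | h
    · simp [h]
    · field_simp
  isSelfAdjoint := by
    rw [IsSelfAdjoint, star_eq_conjTranspose, conjTranspose_smul, conjTranspose_vecMulVec,
      star_star, star_inv₀, ← star_dotProduct]

variable [DecidableEq n]

theorem vnEntropy_diagonal (p : n → ℝ) :
    vnEntropy (diagonal fun i => (p i : ℂ)) = shannonEntropy p := by
  have hp : (diagonal fun i => (p i : ℂ)).IsHermitian :=
    isHermitian_diagonal_iff.mpr fun i => Complex.conj_ofReal (p i)
  have hspec : Finset.univ.val.map hp.eigenvalues = Finset.univ.val.map p := by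
    apply Multiset.map_injective Complex.ofReal_injective
    have hroots := hp.roots_charpoly_eq_eigenvalues
    rw [charpoly_diagonal, Polynomial.roots_prod _ _
      (Finset.prod_ne_zero_iff.mpr fun i _ => Polynomial.X_sub_C_ne_zero _)] at hroots
    simpa [Function.comp_def] using hroots.symm
  have hsum := congrArg (fun s => (s.map fun x => x * Real.logb 2 x).sum) hspec
  simp only [Multiset.map_map] at hsum
  rw [vnEntropy, dif_pos hp, shannonEntropy]
  exact congrArg Neg.neg hsum

theorem vnEntropy_eq_zero_of_isStarProjection {P : Matrix n n ℂ} (hP : IsStarProjection P) :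
    vnEntropy P = 0 := by
  have hH : P.IsHermitian := hP.isSelfAdjoint
  have hterm (k : n) : hH.eigenvalues k * Real.logb 2 (hH.eigenvalues k) = 0 := by
    rcases hP.isIdempotentElem.spectrum_subset ℝ (hH.eigenvalues_mem_spectrum_real k) with h | h
    · simp [h]
    · simp [Set.mem_singleton_iff.mp h]
  simp [vnEntropy, dif_pos hH, hterm]

theorem vnEntropy_vecMulVec_star {ψ : n → ℂ} (hψ : star ψ ⬝ᵥ ψ = 1) :
    vnEntropy (vecMulVec ψ (star ψ)) = 0 := by
  simpa [hψ] using
    vnEntropy_eq_zero_of_isStarProjection (isStarProjection_inv_smul_vecMulVec_star ψ)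

end Entropy

section Discord

variable {A B : Type*} [Fintype B]

theorem ofReal_probA_vecMulVec_star (ψ : A × B → ℂ) (i : A) :
    (probA (vecMulVec ψ (star ψ)) i : ℂ) = star (fun b => ψ (i, b)) ⬝ᵥ fun b => ψ (i, b) := by
  simp [probA, vecMulVec_apply, dotProduct, Complex.mul_conj, ← Complex.normSq_eq_conj_mul_self]

variable [Fintype A] [DecidableEq A] [DecidableEq B]

theorem qdi_vecMulVec_star {ψ : A × B → ℂ} (hψ : star ψ ⬝ᵥ ψ = 1) :
    QDI (vecMulVec ψ (star ψ)) = vnEntropy (ptrB (vecMulVec ψ (star ψ))) := by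
  have hcond (i : A) : vnEntropy (condB (vecMulVec ψ (star ψ)) i) = 0 := by
    rw [condB, ofReal_probA_vecMulVec_star]
    exact vnEntropy_eq_zero_of_isStarProjection
      (isStarProjection_inv_smul_vecMulVec_star fun b => ψ (i, b))
  simp [QDI, hcond, vnEntropy_vecMulVec_star hψ]

theorem qdi_diagonal {r : A × B → ℝ} (hr : 0 ≤ r) :
    QDI (diagonal fun p => (r p : ℂ)) = 0 := by
  have hprob (i : A) : probA (diagonal fun p => (r p : ℂ)) i = ∑ b, r (i, b) := by
    simp [probA]
  have hcond (i : A) : condB (diagonal fun p => (r p : ℂ)) i =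
      diagonal fun b => (((∑ b', r (i, b'))⁻¹ * r (i, b) : ℝ) : ℂ) := by
    ext b b'
    rw [condB, hprob]
    simp [diagonal_apply]
  have hmarginal : ptrB (diagonal fun p => (r p : ℂ)) =
      diagonal fun a => ((∑ b, r (a, b) : ℝ) : ℂ) := by
    ext a a'
    rcases eq_or_ne a a' with rfl | h <;> simp [ptrB, *]
  simp only [QDI, hprob, hcond, hmarginal, vnEntropy_diagonal, shannonEntropy_chain_rule hr,
    sub_self]

end Discord

section GHZ

variable {n : Type*} [DecidableEq n]

/-- The generalised GHZ vector `∑ i, α i |iii⟩` with amplitudes `α`. It is used to compute the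
monogamy defect of the QDI for any number of levels; `ghzVec` is the two-level case with equal
amplitudes. -/
def generalizedGHZ (α : n → ℂ) : n × n × n → ℂ :=
  fun p => if p.1 = p.2.1 ∧ p.1 = p.2.2 then α p.1 else 0

theorem ghzVec_eq_generalizedGHZ :
    ghzVec = generalizedGHZ fun _ : Fin 2 => ((Real.sqrt 2 : ℝ) : ℂ)⁻¹ := by
  ext ⟨a, b, c⟩
  fin_cases a <;> fin_cases b <;> fin_cases c <;> simp [ghzVec, generalizedGHZ]

variable [Fintype n]

theorem ptrB2_generalizedGHZ (α : n → ℂ) :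
    ptrB2 (vecMulVec (generalizedGHZ α) (star (generalizedGHZ α))) =
      diagonal fun p => ((if p.1 = p.2 then ‖α p.1‖ ^ 2 else 0 : ℝ) : ℂ) := by
  ext ⟨a, b⟩ ⟨a', b'⟩
  rcases eq_or_ne a b with rfl | hab
  · rcases eq_or_ne a a' with rfl | ha
    · rcases eq_or_ne a b' with rfl | hb <;>
        simp [ptrB2, generalizedGHZ, vecMulVec_apply, Complex.mul_conj', *]
    · simp [ptrB2, generalizedGHZ, vecMulVec_apply, ha, ha.symm]
  · simp [ptrB2, generalizedGHZ, vecMulVec_apply, diagonal_apply, hab]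

theorem ptrB1_generalizedGHZ_eq_ptrB2 (α : n → ℂ) :
    ptrB1 (vecMulVec (generalizedGHZ α) (star (generalizedGHZ α))) =
      ptrB2 (vecMulVec (generalizedGHZ α) (star (generalizedGHZ α))) := by
  ext ⟨a, b⟩ ⟨a', b'⟩
  simp only [ptrB1, ptrB2, of_apply, vecMulVec_apply, Pi.star_apply, generalizedGHZ, and_comm]

theorem ptrB_generalizedGHZ (α : n → ℂ) :
    ptrB (vecMulVec (generalizedGHZ α) (star (generalizedGHZ α))) =
      diagonal fun i => ((‖α i‖ ^ 2 : ℝ) : ℂ) := by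
  ext i j
  rcases eq_or_ne i j with rfl | hij
  · simp [ptrB, generalizedGHZ, vecMulVec_apply, Fintype.sum_prod_type, ite_and, Complex.mul_conj']
  · simp [ptrB, generalizedGHZ, vecMulVec_apply, Fintype.sum_prod_type, ite_and, hij, hij.symm]

theorem star_generalizedGHZ_dotProduct_self (α : n → ℂ) :
    star (generalizedGHZ α) ⬝ᵥ generalizedGHZ α = star α ⬝ᵥ α := by
  simp [generalizedGHZ, dotProduct, Fintype.sum_prod_type, ite_and]

theorem stmt13_general {α : n → ℂ} (hα : star α ⬝ᵥ α = 1) :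
    QDI (ptrB2 (vecMulVec (generalizedGHZ α) (star (generalizedGHZ α)))) +
      QDI (ptrB1 (vecMulVec (generalizedGHZ α) (star (generalizedGHZ α)))) -
      QDI (vecMulVec (generalizedGHZ α) (star (generalizedGHZ α))) =
        -shannonEntropy (fun i => ‖α i‖ ^ 2) := by
  have hr : 0 ≤ fun p : n × n => if p.1 = p.2 then ‖α p.1‖ ^ 2 else 0 :=
    fun p => by dsimp only; split_ifs <;> positivity
  rw [ptrB1_generalizedGHZ_eq_ptrB2, ptrB2_generalizedGHZ, qdi_diagonal hr,
    qdi_vecMulVec_star (by rw [star_generalizedGHZ_dotProduct_self, hα]), ptrB_generalizedGHZ,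
    vnEntropy_diagonal]
  ring

end GHZ

/-- the monogamy relation for QDI fails for the GHZ state:
`D_{B|A}(ρ_AB) + D_{B'|A}(ρ_AB') − D_{BB'|A}(ρ_ABB') = −1`. -/
theorem stmt13 :
    QDI (ptrB2 (Matrix.vecMulVec ghzVec (star ghzVec))) +
      QDI (ptrB1 (Matrix.vecMulVec ghzVec (star ghzVec))) -
      QDI (Matrix.vecMulVec ghzVec (star ghzVec)) = -1 := by
  rw [ghzVec_eq_generalizedGHZ,
    stmt13_general (by simp [dotProduct, ← mul_inv, ← Complex.ofReal_mul])]
  simpa using shannonEntropy_uniform (n := Fin 2)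
end
end
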